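/- arXiv:quant-ph/0409016 — 2 statements merged into one kernel-verified Lean document; each statement's English description precedes it below -/
import Mathlib

section
/- For every density operator ρ^{AB} on ℂ^m ⊗ ℂ^n with marginals ρ^A and ρ^B, there exists a sequence of triples of partitions (λ_j, μ_j, ν_j) with |λ_j| = |μ_j| = |ν_j| and g_{λ_j μ_j ν_j} ≠ 0 for all j, such that λ_j/|λ_j| → spec(ρ^{AB}), μ_j/|μ_j| → spec(ρ^A), and ν_j/|ν_j| → spec(ρ^B). -/
open Finset Nat

noncomputable section

/-- The cells of the Young diagram of `lam` (row and column indices below `k`). -/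
def youngCells (k : ℕ) (lam : ℕ → ℕ) : Finset (ℕ × ℕ) :=
  (range k ×ˢ range k).filter fun c => c.2 < lam c.1

/-- `lam` is a partition of `k`: a weakly decreasing sequence of naturals summing to `k`
(supported on the first `k` entries). -/
def IsPartitionOf (k : ℕ) (lam : ℕ → ℕ) : Prop :=
  Antitone lam ∧ (∀ i, k ≤ i → lam i = 0) ∧ ∑ i ∈ range k, lam i = k

/-- The Young symmetry operator `e(T)` in the group algebra `ℂ[S_k]`, for a tableau given by
a numbering `t : Fin k → ℕ × ℕ` of the boxes: the signed sum over the column group times the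
sum over the row group. -/
def youngSym (k : ℕ) (t : Fin k → ℕ × ℕ) : MonoidAlgebra ℂ (Equiv.Perm (Fin k)) :=
  (∑ π ∈ univ.filter (fun π : Equiv.Perm (Fin k) => ∀ j, (t (π j)).2 = (t j).2),
      MonoidAlgebra.single π ((Equiv.Perm.sign π : ℤ) : ℂ)) *
    ∑ π ∈ univ.filter (fun π : Equiv.Perm (Fin k) => ∀ j, (t (π j)).1 = (t j).1),
      MonoidAlgebra.single π (1 : ℂ)

/-- The left ideal `ℂ[S_k]·e(T)` generated by the Young symmetry operator of the tableau `t`;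
it carries the irreducible representation `U_lam` of `S_k` for `lam` the shape of `t`. -/
def youngIdeal (k : ℕ) (t : Fin k → ℕ × ℕ) :
    Submodule ℂ (MonoidAlgebra ℂ (Equiv.Perm (Fin k))) :=
  LinearMap.range (LinearMap.mulRight ℂ (youngSym k t))

/-- The value at `π` of the character of the representation of `S_k` on the left ideal
`ℂ[S_k]·e(T)`, i.e. the trace of left multiplication by `π` on this ideal.  For `t` a
tableau of shape `lam ⊢ k` this is the irreducible character `χ_lam(π)`. -/
def youngIdealChar (k : ℕ) (t : Fin k → ℕ × ℕ) (π : Equiv.Perm (Fin k)) : ℂ :=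
  LinearMap.trace ℂ (youngIdeal k t)
    ((LinearMap.mulLeft ℂ (MonoidAlgebra.single π (1 : ℂ))).restrict
      (fun x hx => by
        obtain ⟨a, rfl⟩ := hx
        exact ⟨MonoidAlgebra.single π (1 : ℂ) * a, by
          simp only [LinearMap.mulRight_apply, LinearMap.mulLeft_apply, mul_assoc]⟩))

/-- `chi` is the family of irreducible characters of the symmetric groups: `chi k lam` is the
character of the irreducible representation of `S_k` indexed by the partition `lam ⊢ k`,
realised on the left ideal generated by the Young symmetry operator of any tableau of
shape `lam`. -/
def IsCharacterFamily (chi : (k : ℕ) → (ℕ → ℕ) → Equiv.Perm (Fin k) → ℂ) : Prop :=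
  ∀ (k : ℕ) (lam : ℕ → ℕ), IsPartitionOf k lam →
    ∀ t : Fin k → ℕ × ℕ, Set.BijOn t Set.univ ↑(youngCells k lam) →
      ∀ π, chi k lam π = youngIdealChar k t π

/-- `g` is the family of Kronecker coefficients associated to the character family `chi`:
`g k lam mu nu` is the multiplicity of `U_lam` in `U_mu ⊗ U_nu`, given by
`(1/k!) Σ_{π ∈ S_k} χ_lam(π) χ_mu(π) χ_nu(π)`. -/
def IsKroneckerFamily (chi : (k : ℕ) → (ℕ → ℕ) → Equiv.Perm (Fin k) → ℂ)
    (g : (k : ℕ) → (ℕ → ℕ) → (ℕ → ℕ) → (ℕ → ℕ) → ℕ) : Prop :=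
  ∀ (k : ℕ) (lam mu nu : ℕ → ℕ), IsPartitionOf k lam → IsPartitionOf k mu →
    IsPartitionOf k nu →
      (g k lam mu nu : ℂ) = (k ! : ℂ)⁻¹ * ∑ π : Equiv.Perm (Fin k),
        chi k lam π * chi k mu π * chi k nu π

open Filter Matrix ComplexOrder

/-!
The isotypic projectors `P_λ` of `S_k` acting on `(ℂ^d)^{⊗k}` measure the spectrum of a state `σ`:
`tr (P_λ σ^{⊗k})` is at most `(k + 1)^{O(1)} F(λ̄, spec σ)^{2k}`, where `F` is the fidelity
`∑ i, √(λ̄ i * spec σ i)`. Hence it is exponentially small unless `λ̄` is close to `spec σ`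
(Keyl–Werner). For `ρ^{AB}`, the projector `P_λ` for the diagonal action of `S_k` on words in
`A × B` commutes with `P_μ ⊗ P_ν`, so the three measurements on `A`, `B` and `AB` have a joint
distribution. As each marginal puts weight less than `1/3` on bad partitions, some triple of good
partitions has `P_λ (P_μ ⊗ P_ν) ≠ 0`, already in the group algebra of `S_k × S_k`. The trace of
this projector in the regular representation is a multiple of `g_{λμν}`, which is thus nonzero.
-/

section Partitions

variable {k : ℕ} {lam mu : ℕ → ℕ}

lemma IsPartitionOf.apply_le (h : IsPartitionOf k lam) (i : ℕ) : lam i ≤ k := by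
  rcases lt_or_ge i k with hi | hi
  · exact (Finset.single_le_sum (fun _ _ => Nat.zero_le _) (Finset.mem_range.2 hi)).trans_eq h.2.2
  · exact (h.2.1 i hi).trans_le (Nat.zero_le k)

lemma sum_min_succ (s : Finset ℕ) (nu : ℕ → ℕ) (N : ℕ) :
    ∑ i ∈ s, min (nu i) (N + 1) = ∑ i ∈ s, min (nu i) N + #{i ∈ s | N < nu i} := by
  rw [Finset.card_filter, ← Finset.sum_add_distrib]
  refine Finset.sum_congr rfl fun i _ => ?_
  split_ifs <;> omega

lemma IsPartitionOf.lt_apply_iff (h : IsPartitionOf k lam) (N i : ℕ) :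
    N < lam i ↔ i < #{l ∈ range k | N < lam l} := by
  have hex : ∃ l, lam l ≤ N := ⟨k, by simp [h.2.1 k le_rfl]⟩
  have hfind : ∀ l, N < lam l ↔ l < Nat.find hex := fun l =>
    ⟨fun hl => lt_of_not_ge fun hle => (hl.trans_le (h.1 hle)).not_ge (Nat.find_spec hex),
      fun hl => not_le.1 (Nat.find_min hex hl)⟩
  have hle : Nat.find hex ≤ k := Nat.find_min' hex (by simp [h.2.1 k le_rfl])
  have hrows : {l ∈ range k | N < lam l} = range (Nat.find hex) := by
    ext l
    simp only [Finset.mem_filter, Finset.mem_range, hfind]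
    omega
  rw [hrows, Finset.card_range, hfind]

lemma IsPartitionOf.eq_of_sum_min_eq (hlam : IsPartitionOf k lam)
    (hmu : IsPartitionOf k mu)
    (h : ∀ N, ∑ i ∈ range k, min (lam i) N = ∑ i ∈ range k, min (mu i) N) : lam = mu := by
  funext i
  refine eq_of_forall_lt_iff fun N => ?_
  have hcol := h (N + 1)
  rw [sum_min_succ, sum_min_succ, h N, Nat.add_left_cancel_iff] at hcol
  rw [hlam.lt_apply_iff, hmu.lt_apply_iff, hcol]

end Partitions

namespace KroneckerSpectrum

section Rank

variable {K X : Type*} [Field K] [Fintype X]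

lemma trace_eq_rank_of_isIdempotentElem {M : Matrix X X K} (hM : IsIdempotentElem M) :
    M.trace = M.rank := by
  classical
  have hlin : IsIdempotentElem (Matrix.toLin' M) := hM.map (Matrix.toLinAlgEquiv' (R := K))
  rw [← Matrix.trace_toLin'_eq, (LinearMap.IsIdempotentElem.isProj_range _ hlin).trace]
  rfl

lemma rank_le_card_of_factorsThrough {Y : Type*} [Fintype Y] {M : Matrix X X K} {f : X → Y}
    (hM : ∀ u v w, f v = f w → M u v = M u w) : M.rank ≤ Fintype.card Y := by
  classical
  have hfactor : M = Matrix.of (fun u y => Function.extend f (M u) 0 y) *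
      Matrix.of (fun y v => if f v = y then (1 : K) else 0) := by
    ext u v
    have : Function.FactorsThrough (M u) f := fun v w hvw => hM u v w hvw
    simp [Matrix.mul_apply, this.extend_apply]
  rw [hfactor]
  exact (Matrix.rank_mul_le_right _ _).trans (Matrix.rank_le_card_height _)

end Rank

section PermutationRepresentation

variable {G X : Type*} [Group G] [Fintype X] [DecidableEq X]

/-- The representation of the group algebra `ℂ[G]` by permutation matrices that extends an action
of `G` on the finite set `X`. -/
def permRep (act : G →* Equiv.Perm X) : MonoidAlgebra ℂ G →ₐ[ℂ] Matrix X X ℂ :=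
  MonoidAlgebra.lift ℂ _ G
    { toFun g := Matrix.of fun u v => if act g v = u then 1 else 0
      map_one' := by
        ext u v
        simp [Matrix.one_apply, eq_comm]
      map_mul' g h := by
        ext u v
        simp [Matrix.mul_apply] }

lemma permRep_single (act : G →* Equiv.Perm X) (g : G) (c : ℂ) (u v : X) :
    permRep act (MonoidAlgebra.single g c) u v = if act g v = u then c else 0 := by
  simp [permRep, MonoidAlgebra.lift_single]

lemma permRep_mapDomain {H : Type*} [Group H] (act : G →* Equiv.Perm X) (f : H →* G)
    (x : MonoidAlgebra ℂ H) :
    permRep act (MonoidAlgebra.mapDomainAlgHom ℂ ℂ f x) = permRep (act.comp f) x := by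
  have : (permRep act).comp (MonoidAlgebra.mapDomainAlgHom ℂ ℂ f) = permRep (act.comp f) := by
    ext g u v
    simp [permRep_single]
  exact DFunLike.congr_fun this x

lemma eq_sum_coeff_smul_single [Fintype G] (x : MonoidAlgebra ℂ G) :
    x = ∑ g, x.coeff g • MonoidAlgebra.single g (1 : ℂ) := by
  classical
  ext h
  simp [MonoidAlgebra.coeff_sum]

lemma permRep_apply [Fintype G] (act : G →* Equiv.Perm X) (x : MonoidAlgebra ℂ G) (u v : X) :
    permRep act x u v = ∑ g, if act g v = u then x.coeff g else 0 := by
  conv_lhs => rw [eq_sum_coeff_smul_single x]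
  simp [Matrix.sum_apply, permRep_single]

/-- Self-adjointness for the involution `g ↦ g⁻¹` of `ℂ[G]`, extended antilinearly. -/
def IsSelfAdjointElem (x : MonoidAlgebra ℂ G) : Prop :=
  ∀ g, x.coeff g⁻¹ = star (x.coeff g)

lemma IsSelfAdjointElem.isHermitian_permRep [Finite G] {x : MonoidAlgebra ℂ G}
    (hx : IsSelfAdjointElem x) (act : G →* Equiv.Perm X) : (permRep act x).IsHermitian := by
  have := Fintype.ofFinite G
  ext u v
  rw [Matrix.conjTranspose_apply, permRep_apply, permRep_apply, star_sum,
    ← Equiv.sum_comp (Equiv.inv G)]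
  refine Finset.sum_congr rfl fun g _ => ?_
  have hact : act g⁻¹ u = v ↔ act g v = u := by rw [map_inv, Equiv.Perm.inv_eq_iff_eq, eq_comm]
  simp only [Equiv.inv_apply, hact, hx g, apply_ite star, star_star, star_zero]

lemma IsSelfAdjointElem.isStarProjection_permRep [Finite G] {x : MonoidAlgebra ℂ G}
    (hx : IsSelfAdjointElem x) (hxx : IsIdempotentElem x) (act : G →* Equiv.Perm X) :
    IsStarProjection (permRep act x) :=
  ⟨hxx.map (permRep act), hx.isHermitian_permRep act⟩

end PermutationRepresentation

section RegularRepresentation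

variable {G : Type*} [Group G] [Fintype G] [DecidableEq G]

/-- The left regular representation of `ℂ[G]`. -/
def regRep (G : Type*) [Group G] [Fintype G] [DecidableEq G] :
    MonoidAlgebra ℂ G →ₐ[ℂ] Matrix G G ℂ :=
  permRep (MulAction.toPermHom G G)

lemma regRep_apply (x : MonoidAlgebra ℂ G) (u v : G) : regRep G x u v = x.coeff (u * v⁻¹) := by
  simp [regRep, permRep_apply, ← eq_mul_inv_iff_mul_eq]

lemma regRep_injective : Function.Injective (regRep G) := by
  intro x y hxy
  ext g
  simpa [regRep_apply] using congr_fun₂ hxy g 1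

lemma trace_regRep (x : MonoidAlgebra ℂ G) :
    (regRep G x).trace = Fintype.card G * x.coeff 1 := by
  simp [Matrix.trace, regRep_apply]

lemma card_mul_coeff_one_eq_rank {x : MonoidAlgebra ℂ G} (hx : IsIdempotentElem x) :
    Fintype.card G * x.coeff 1 = (regRep G x).rank := by
  rw [← trace_regRep, trace_eq_rank_of_isIdempotentElem (hx.map (regRep G))]

end RegularRepresentation

section Coefficients

variable {G : Type*} [Group G]

lemma coeff_mul_eq_sum [Fintype G] (x y : MonoidAlgebra ℂ G) (g : G) :
    (x * y).coeff g = ∑ h, x.coeff h * y.coeff (h⁻¹ * g) := by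
  classical
  have hxy := regRep_apply (x * y) g 1
  rw [map_mul, Matrix.mul_apply, inv_one, mul_one] at hxy
  rw [← hxy, ← Equiv.sum_comp ((Equiv.inv G).trans (Equiv.mulRight g))]
  simp [regRep_apply]

lemma coeff_mul_one_comm [Finite G] (x y : MonoidAlgebra ℂ G) :
    (x * y).coeff 1 = (y * x).coeff 1 := by
  have := Fintype.ofFinite G
  rw [coeff_mul_eq_sum, coeff_mul_eq_sum, ← Equiv.sum_comp (Equiv.inv G)]
  simp [mul_comm]

lemma eq_zero_of_coeff_one_eq_zero [Finite G] {x : MonoidAlgebra ℂ G} (hx : IsIdempotentElem x)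
    (hx1 : x.coeff 1 = 0) : x = 0 := by
  classical
  have := Fintype.ofFinite G
  have hrank := card_mul_coeff_one_eq_rank hx
  rw [hx1, mul_zero, eq_comm, Nat.cast_eq_zero, Matrix.rank, Submodule.finrank_eq_zero,
    LinearMap.range_eq_bot, ← Matrix.toLin'_apply', LinearEquiv.map_eq_zero_iff] at hrank
  exact regRep_injective (hrank.trans (map_zero _).symm)

end Coefficients

section SignedSums

variable {G : Type*} [Group G]

lemma mul_mul_mem_of_single_mem [Finite G] {a b : MonoidAlgebra ℂ G}
    {S : Submodule ℂ (MonoidAlgebra ℂ G)} (h : ∀ g, a * MonoidAlgebra.single g 1 * b ∈ S)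
    (x : MonoidAlgebra ℂ G) : a * x * b ∈ S := by
  have := Fintype.ofFinite G
  rw [eq_sum_coeff_smul_single x, Finset.mul_sum, Finset.sum_mul]
  refine S.sum_mem fun g _ => ?_
  rw [mul_smul_comm, smul_mul_assoc]
  exact S.smul_mem _ (h g)

variable [Fintype G]

open Classical in
/-- The sum of the elements of the subgroup `H` of `G`, weighted by the sign character `χ`. -/
def signedSum (χ : G →* ℤˣ) (H : Subgroup G) : MonoidAlgebra ℂ G :=
  ∑ g : G with g ∈ H, MonoidAlgebra.single g ((χ g : ℤ) : ℂ)

variable {χ ψ : G →* ℤˣ} {H K : Subgroup G} {g : G}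

open Classical in
lemma coeff_signedSum : (signedSum χ H).coeff g = if g ∈ H then ((χ g : ℤ) : ℂ) else 0 := by
  simp +contextual [signedSum, MonoidAlgebra.coeff_sum, Finsupp.finsetSum_apply,
    Finsupp.single_apply]

lemma coe_units_mul_self (u : ℤˣ) : ((u : ℤ) : ℂ) * ((u : ℤ) : ℂ) = 1 := by
  rcases Int.units_eq_one_or u with rfl | rfl <;> simp

lemma single_mul_signedSum (hg : g ∈ H) :
    MonoidAlgebra.single g 1 * signedSum χ H = ((χ g : ℤ) : ℂ) • signedSum χ H := by
  simp only [signedSum, Finset.mul_sum, Finset.smul_sum, MonoidAlgebra.single_mul_single,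
    MonoidAlgebra.smul_single, smul_eq_mul]
  refine Finset.sum_equiv (Equiv.mulLeft g) (fun h => by simp [H.mul_mem_cancel_left hg])
    fun h _ => ?_
  simp [← mul_assoc, coe_units_mul_self]

lemma signedSum_mul_single (hg : g ∈ H) :
    signedSum χ H * MonoidAlgebra.single g 1 = ((χ g : ℤ) : ℂ) • signedSum χ H := by
  simp only [signedSum, Finset.sum_mul, Finset.smul_sum, MonoidAlgebra.single_mul_single,
    MonoidAlgebra.smul_single, smul_eq_mul]
  refine Finset.sum_equiv (Equiv.mulRight g) (fun h => by simp [H.mul_mem_cancel_right hg])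
    fun h _ => ?_
  simp [mul_left_comm _ ((χ h : ℤ) : ℂ), coe_units_mul_self]

/-- Moving `g` through the product from either side multiplies it by opposite signs. -/
lemma signedSum_mul_single_mul_signedSum_eq_zero (σ : G) (hg : g ∈ H) (hσg : σ * g * σ⁻¹ ∈ K)
    (hsign : χ (σ * g * σ⁻¹) = -ψ g) :
    signedSum χ K * MonoidAlgebra.single σ 1 * signedSum ψ H = 0 := by
  set x := signedSum χ K * MonoidAlgebra.single σ 1 * signedSum ψ H with hx
  have hleft : signedSum χ K * MonoidAlgebra.single (σ * g) 1 * signedSum ψ H =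
      ((χ (σ * g * σ⁻¹) : ℤ) : ℂ) • x := by
    rw [hx, ← smul_mul_assoc, ← smul_mul_assoc, ← signedSum_mul_single hσg,
      mul_assoc (signedSum χ K) (MonoidAlgebra.single _ _) (MonoidAlgebra.single _ _),
      MonoidAlgebra.single_mul_single, inv_mul_cancel_right, one_mul]
  have hright : signedSum χ K * MonoidAlgebra.single (σ * g) 1 * signedSum ψ H =
      ((ψ g : ℤ) : ℂ) • x := by
    rw [hx, ← mul_smul_comm, ← single_mul_signedSum hg, ← mul_assoc,
      mul_assoc (signedSum χ K) (MonoidAlgebra.single _ _) (MonoidAlgebra.single _ _),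
      MonoidAlgebra.single_mul_single, one_mul]
  have hdiff : (((ψ g : ℤ) : ℂ) - ((χ (σ * g * σ⁻¹) : ℤ) : ℂ)) • x = 0 := by
    rw [sub_smul, ← hleft, hright, sub_self]
  refine (smul_eq_zero.1 hdiff).resolve_left ?_
  rw [hsign]
  rcases Int.units_eq_one_or (ψ g) with h | h <;> norm_num [h]

end SignedSums

section LabelStabilizer

variable {α β : Type*}

/-- The permutations of `α` that preserve every fibre of the labelling `f`, as a subgroup. -/
def labelStabilizer (f : α → β) : Subgroup (Equiv.Perm α) where
  carrier := {π | ∀ j, f (π j) = f j}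
  one_mem' _ := rfl
  mul_mem' hπ hτ j := (hπ _).trans (hτ j)
  inv_mem' {π} hπ j := by
    rw [← hπ (π⁻¹ j), ← Equiv.Perm.mul_apply, mul_inv_cancel, Equiv.Perm.one_apply]

lemma mem_labelStabilizer {f : α → β} {π : Equiv.Perm α} :
    π ∈ labelStabilizer f ↔ ∀ j, f (π j) = f j :=
  Iff.rfl

lemma swap_mem_labelStabilizer [DecidableEq α] {f : α → β} {i j : α} (h : f i = f j) :
    Equiv.swap i j ∈ labelStabilizer f := by
  intro l
  rw [Equiv.swap_apply_def]
  split_ifs with hi hj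
  · rw [hi, h]
  · rw [hj, h]
  · rfl

end LabelStabilizer

section Tableaux

variable {k : ℕ} {lam mu : ℕ → ℕ} {t s : Fin k → ℕ × ℕ}

/-- `t` numbers the boxes of the Young diagram of `lam ⊢ k`: `t j = (row, column)` of entry `j`. -/
structure IsTableau (k : ℕ) (lam : ℕ → ℕ) (t : Fin k → ℕ × ℕ) : Prop where
  isPartitionOf : IsPartitionOf k lam
  bijOn : Set.BijOn t Set.univ ↑(youngCells k lam)

namespace IsTableau

lemma injective (ht : IsTableau k lam t) : Function.Injective t :=
  Set.injOn_univ.1 ht.bijOn.injOn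

lemma row_lt (ht : IsTableau k lam t) (j : Fin k) : (t j).1 < k := by
  have := ht.bijOn.mapsTo (Set.mem_univ j)
  simp_all [youngCells]

lemma col_lt (ht : IsTableau k lam t) (j : Fin k) : (t j).2 < lam (t j).1 := by
  have := ht.bijOn.mapsTo (Set.mem_univ j)
  simp_all [youngCells]

lemma exists_eq (ht : IsTableau k lam t) {r c : ℕ} (hc : c < lam r) : ∃ j, t j = (r, c) := by
  have hr : r < k := lt_of_not_ge fun hr => by simp [ht.isPartitionOf.2.1 r hr] at hc
  have hck : c < k := hc.trans_le (ht.isPartitionOf.apply_le r)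
  obtain ⟨j, -, hj⟩ := ht.bijOn.surjOn
    (show (r, c) ∈ (youngCells k lam : Set (ℕ × ℕ)) by simp [youngCells, hr, hck, hc])
  exact ⟨j, hj⟩

lemma card_row_filter_col_lt (ht : IsTableau k lam t) (r N : ℕ) :
    #{j | (t j).1 = r ∧ (t j).2 < N} = min (lam r) N := by
  rw [← Finset.card_range (min (lam r) N)]
  refine Finset.card_bij (fun j _ => (t j).2) ?_ ?_ ?_
  · intro j hj
    have hcol := ht.col_lt j
    simp only [Finset.mem_filter, Finset.mem_univ, true_and] at hj
    rw [hj.1] at hcol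
    simp [hcol, hj.2]
  · intro j hj j' hj' hcol
    simp only [Finset.mem_filter, Finset.mem_univ, true_and] at hj hj'
    exact ht.injective (Prod.ext (hj.1.trans hj'.1.symm) hcol)
  · intro c hc
    simp only [Finset.mem_range, lt_min_iff] at hc
    obtain ⟨j, hj⟩ := ht.exists_eq hc.1
    exact ⟨j, by simp [hj, hc.2], by simp [hj]⟩

lemma card_row (ht : IsTableau k lam t) (r : ℕ) : #{j | (t j).1 = r} = lam r := by
  rw [← min_self (lam r), ← ht.card_row_filter_col_lt]
  congr 1
  ext j
  simpa using fun hr => hr ▸ ht.col_lt j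

end IsTableau

lemma card_transversal_le (ht : IsTableau k lam t) {c : Fin k → ℕ}
    (hc : Function.Injective fun j => ((t j).1, c j)) (r N : ℕ) :
    #{j | (t j).1 = r ∧ c j < N} ≤ min (lam r) N := by
  refine le_min ?_ ?_
  · rw [← ht.card_row r]
    exact Finset.card_le_card fun j => by simp +contextual
  · rw [← Finset.card_range N]
    refine Finset.card_le_card_of_injOn c (fun j hj => by simp_all) fun j hj j' hj' hcol => ?_
    simp only [Finset.coe_filter, Finset.mem_univ, true_and, Set.mem_ofPred_eq] at hj hj'
    exact hc (Prod.ext (hj.1.trans hj'.1.symm) hcol)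

lemma IsTableau.sum_card_row_filter (ht : IsTableau k lam t) (p : Fin k → Prop)
    [DecidablePred p] : ∑ r ∈ range k, #{j | (t j).1 = r ∧ p j} = #{j | p j} := by
  rw [Finset.card_eq_sum_card_fiberwise (f := fun j => (t j).1) (t := range k)
    fun j _ => by simpa using ht.row_lt j]
  simp only [Finset.filter_filter, and_comm]

lemma IsTableau.sum_card_row_filter_comp_col_lt (ht : IsTableau k lam t) (hs : IsTableau k mu s)
    (σ : Equiv.Perm (Fin k)) (N : ℕ) :
    ∑ r ∈ range k, #{j | (t j).1 = r ∧ (s (σ j)).2 < N} = ∑ r ∈ range k, min (mu r) N := by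
  rw [ht.sum_card_row_filter, Finset.card_equiv (t := {j | (s j).2 < N}) σ fun j => by simp,
    ← hs.sum_card_row_filter]
  simp only [hs.card_row_filter_col_lt]

/-- Each row of `t` has its entries in distinct columns of `s ∘ σ`, so the first `N` columns of `s`
receive at most `min (lam r) N` of them from row `r`. -/
lemma sum_min_le_sum_min_of_injective (ht : IsTableau k lam t) (hs : IsTableau k mu s)
    {σ : Equiv.Perm (Fin k)} (hσ : Function.Injective fun j => ((t j).1, (s (σ j)).2)) (N : ℕ) :
    ∑ r ∈ range k, min (mu r) N ≤ ∑ r ∈ range k, min (lam r) N := by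
  rw [← ht.sum_card_row_filter_comp_col_lt hs σ N]
  exact Finset.sum_le_sum fun r _ => card_transversal_le ht hσ r N

/-- The case of equality in `sum_min_le_sum_min_of_injective`. -/
lemma IsTableau.col_apply_lt_of_injective (ht : IsTableau k lam t) {σ : Equiv.Perm (Fin k)}
    (hσ : Function.Injective fun j => ((t j).1, (t (σ j)).2)) (j : Fin k) :
    (t (σ j)).2 < lam (t j).1 := by
  have hcard := (Finset.sum_eq_sum_iff_of_le fun r _ => card_transversal_le ht hσ r _).1
    (ht.sum_card_row_filter_comp_col_lt ht σ (lam (t j).1)) (t j).1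
    (Finset.mem_range.2 (ht.row_lt j))
  rw [min_self, ← ht.card_row (t j).1] at hcard
  have hrow := Finset.eq_of_subset_of_card_le (fun l => by simp +contextual) hcard.ge
  have hj : j ∈ ({l | (t l).1 = (t j).1} : Finset (Fin k)) := by simp
  rw [← hrow] at hj
  exact (Finset.mem_filter.1 hj).2.2.trans_eq (ht.card_row _)

lemma IsTableau.exists_eq_mul_of_injective (ht : IsTableau k lam t) {σ : Equiv.Perm (Fin k)}
    (hσ : Function.Injective fun j => ((t j).1, (t (σ j)).2)) :
    ∃ c ∈ labelStabilizer fun j => (t j).2, ∃ r ∈ labelStabilizer fun j => (t j).1, σ = c * r := by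
  choose p hp using fun j => ht.exists_eq (ht.col_apply_lt_of_injective hσ j)
  have hinj : Function.Injective p := fun i j hij => hσ (by simp only [← hp, hij])
  let r := Equiv.ofBijective p (Finite.injective_iff_bijective.1 hinj)
  refine ⟨σ * r⁻¹, fun j => ?_, r, fun j => by simp [r, hp], by simp⟩
  simpa [r, Equiv.ofBijective_apply_symm_apply] using (congrArg Prod.snd (hp (r.symm j))).symm

end Tableaux

section MinimalIdempotents

variable {G : Type*} [Group G]

/-- A minimal (primitive) idempotent of `ℂ[G]`: a nonzero idempotent `p` with
`p ℂ[G] p = ℂ p`, so that the left ideal `ℂ[G] p` is an irreducible representation. -/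
structure IsMinimalIdempotent (p : MonoidAlgebra ℂ G) : Prop where
  ne_zero : p ≠ 0
  isIdempotentElem : IsIdempotentElem p
  exists_eq_smul : ∀ x, ∃ c : ℂ, p * x * p = c • p

namespace IsMinimalIdempotent

variable {p : MonoidAlgebra ℂ G}

lemma coeff_one_ne_zero [Finite G] (hp : IsMinimalIdempotent p) : p.coeff 1 ≠ 0 :=
  fun h => hp.ne_zero (eq_zero_of_coeff_one_eq_zero hp.isIdempotentElem h)

lemma mul_single_mul [Finite G] (hp : IsMinimalIdempotent p) (g : G) :
    p * MonoidAlgebra.single g 1 * p = (p.coeff g⁻¹ / p.coeff 1) • p := by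
  obtain ⟨c, hc⟩ := hp.exists_eq_smul (MonoidAlgebra.single g 1)
  have hcoeff : p.coeff g⁻¹ = c * p.coeff 1 := by
    rw [← smul_eq_mul, ← MonoidAlgebra.coeff_smul_apply, ← hc, coeff_mul_one_comm, ← mul_assoc,
      hp.isIdempotentElem]
    simp
  rw [hc, hcoeff, mul_div_cancel_right₀ _ hp.coeff_one_ne_zero]

end IsMinimalIdempotent

lemma ne_zero_of_mul_self_eq_smul [Finite G] {x : MonoidAlgebra ℂ G}
    {c : ℂ} (hx1 : x.coeff 1 ≠ 0) (hx : x * x = c • x) : c ≠ 0 := by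
  classical
  have := Fintype.ofFinite G
  rintro rfl
  have hnil : IsNilpotent (regRep G x) := ⟨2, by rw [pow_two, ← map_mul, hx, zero_smul, map_zero]⟩
  have htrace := (Matrix.isNilpotent_trace_of_isNilpotent hnil).eq_zero
  rw [trace_regRep] at htrace
  simp [hx1] at htrace

lemma isMinimalIdempotent_inv_smul [Finite G] {x : MonoidAlgebra ℂ G}
    (hx1 : x.coeff 1 ≠ 0) {n : ℂ} (hxx : x * x = n • x) (hx : ∀ y, ∃ c : ℂ, x * y * x = c • x) :
    IsMinimalIdempotent (n⁻¹ • x) where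
  ne_zero h := by
    have h1 := congrArg (fun y : MonoidAlgebra ℂ G => y.coeff 1) h
    simp [hx1, ne_zero_of_mul_self_eq_smul hx1 hxx] at h1
  isIdempotentElem := by
    rw [IsIdempotentElem, smul_mul_smul_comm, hxx, smul_smul, mul_assoc,
      inv_mul_cancel₀ (ne_zero_of_mul_self_eq_smul hx1 hxx), mul_one]
  exists_eq_smul y := by
    obtain ⟨c, hc⟩ := hx y
    refine ⟨n⁻¹ * c, ?_⟩
    rw [smul_mul_assoc, smul_mul_smul_comm, hc, smul_smul, smul_smul]
    ring_nf

variable [Fintype G]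

/-- The central idempotent of `ℂ[G]` that projects onto the isotypic component of the irreducible
representation generated by a minimal idempotent `p`. -/
def centralProjector (p : MonoidAlgebra ℂ G) : MonoidAlgebra ℂ G :=
  p.coeff 1 • ∑ g, MonoidAlgebra.single g 1 * p * MonoidAlgebra.single g⁻¹ 1

variable {p q : MonoidAlgebra ℂ G}

lemma coeff_centralProjector (g : G) :
    (centralProjector p).coeff g = p.coeff 1 * ∑ h, p.coeff (h⁻¹ * g * h) := by
  simp [centralProjector, MonoidAlgebra.coeff_sum, mul_assoc]

lemma coeff_centralProjector_eq_of_isConj {g h : G} (hgh : IsConj g h) :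
    (centralProjector p).coeff g = (centralProjector p).coeff h := by
  obtain ⟨c, rfl⟩ := isConj_iff.1 hgh
  rw [coeff_centralProjector, coeff_centralProjector, ← Equiv.sum_comp (Equiv.mulLeft c⁻¹)]
  simp [mul_assoc]

lemma commute_centralProjector (p x : MonoidAlgebra ℂ G) : Commute (centralProjector p) x := by
  classical
  ext g
  rw [coeff_mul_eq_sum, coeff_mul_eq_sum,
    ← Equiv.sum_comp ((Equiv.inv G).trans (Equiv.mulLeft g))]
  refine Finset.sum_congr rfl fun h _ => ?_
  rw [mul_comm]
  congr 1
  · simp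
  · exact coeff_centralProjector_eq_of_isConj (isConj_iff.2 ⟨h⁻¹, by simp [mul_assoc]⟩)

lemma centralProjector_mul_eq_zero (hpq : ∀ x, p * x * q = 0) :
    centralProjector p * centralProjector q = 0 := by
  rw [centralProjector, centralProjector, smul_mul_smul_comm, Finset.sum_mul_sum]
  refine smul_eq_zero_of_right _ (Finset.sum_eq_zero fun g _ => Finset.sum_eq_zero fun h _ => ?_)
  calc MonoidAlgebra.single g 1 * p * MonoidAlgebra.single g⁻¹ 1 *
        (MonoidAlgebra.single h 1 * q * MonoidAlgebra.single h⁻¹ 1)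
      = MonoidAlgebra.single g 1 * (p * (MonoidAlgebra.single g⁻¹ 1 * MonoidAlgebra.single h 1) *
          q) * MonoidAlgebra.single h⁻¹ 1 := by simp only [mul_assoc]
    _ = 0 := by rw [hpq, mul_zero, zero_mul]

lemma isSelfAdjointElem_centralProjector (hp : ∀ g, star (p.coeff g) = p.coeff g)
    (hinv : ∀ g : G, IsConj g⁻¹ g) : IsSelfAdjointElem (centralProjector p) := fun g => by
  rw [coeff_centralProjector_eq_of_isConj (hinv g), coeff_centralProjector, star_mul', star_sum]
  simp only [hp]

namespace IsMinimalIdempotent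

lemma centralProjector_mul_self (hp : IsMinimalIdempotent p) : centralProjector p * p = p := by
  have hterm : ∀ g : G, MonoidAlgebra.single g 1 * p * MonoidAlgebra.single g⁻¹ 1 * p =
      (p.coeff g / p.coeff 1) • (MonoidAlgebra.single g 1 * p) := fun g => by
    rw [mul_assoc (MonoidAlgebra.single g 1), mul_assoc (MonoidAlgebra.single g 1),
      hp.mul_single_mul, inv_inv, mul_smul_comm]
  calc centralProjector p * p = ∑ g, p.coeff g • MonoidAlgebra.single g 1 * p := by
        simp only [centralProjector, smul_mul_assoc, Finset.sum_mul, hterm, Finset.smul_sum,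
          smul_smul, mul_div_cancel₀ _ hp.coeff_one_ne_zero]
    _ = p := by rw [← Finset.sum_mul, ← eq_sum_coeff_smul_single, hp.isIdempotentElem]

lemma centralProjector_ne_zero (hp : IsMinimalIdempotent p) : centralProjector p ≠ 0 :=
  fun h => hp.ne_zero (by rw [← hp.centralProjector_mul_self, h, zero_mul])

lemma isIdempotentElem_centralProjector (hp : IsMinimalIdempotent p) :
    IsIdempotentElem (centralProjector p) := by
  have hterm : ∀ g : G, centralProjector p *
      (MonoidAlgebra.single g 1 * p * MonoidAlgebra.single g⁻¹ 1) =
      MonoidAlgebra.single g 1 * p * MonoidAlgebra.single g⁻¹ 1 := fun g => by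
    rw [← mul_assoc, ← mul_assoc, (commute_centralProjector p _).eq, mul_assoc _ _ p,
      hp.centralProjector_mul_self]
  nth_rw 2 [IsIdempotentElem, centralProjector]
  rw [mul_smul_comm, Finset.mul_sum, Finset.sum_congr rfl fun g _ => hterm g, centralProjector]

lemma trace_permRep_centralProjector [DecidableEq G] {X : Type*} [Fintype X] [DecidableEq X]
    (hp : IsMinimalIdempotent p) (act : G →* Equiv.Perm X) :
    (permRep act (centralProjector p)).trace = (regRep G p).rank * (permRep act p).rank := by
  have hterm : ∀ g : G, (permRep act (MonoidAlgebra.single g 1 * p *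
      MonoidAlgebra.single g⁻¹ 1)).trace = (permRep act p).trace := fun g => by
    rw [map_mul, Matrix.trace_mul_comm, ← map_mul, ← mul_assoc, MonoidAlgebra.single_mul_single,
      inv_mul_cancel, mul_one, ← MonoidAlgebra.one_def, one_mul]
  rw [centralProjector, map_smul, map_sum, Matrix.trace_smul, Matrix.trace_sum,
    Finset.sum_congr rfl fun g _ => hterm g, Finset.sum_const, Finset.card_univ, nsmul_eq_mul,
    smul_eq_mul, mul_left_comm, ← mul_assoc, card_mul_coeff_one_eq_rank hp.isIdempotentElem,
    trace_eq_rank_of_isIdempotentElem (hp.isIdempotentElem.map _)]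

end IsMinimalIdempotent

lemma trace_mulLeft_single_comp_mulRight (g : G) (y : MonoidAlgebra ℂ G) :
    LinearMap.trace ℂ _ (LinearMap.mulLeft ℂ (MonoidAlgebra.single g (1 : ℂ)) ∘ₗ
      LinearMap.mulRight ℂ y) = ∑ h, y.coeff (h⁻¹ * g⁻¹ * h) := by
  classical
  rw [LinearMap.trace_eq_matrix_trace ℂ (MonoidAlgebra.basis G ℂ), Matrix.trace]
  refine Finset.sum_congr rfl fun h _ => ?_
  rw [Matrix.diag_apply, LinearMap.toMatrix_apply,
    show (MonoidAlgebra.basis G ℂ).repr = MonoidAlgebra.coeffLinearEquiv ℂ from rfl]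
  simp [mul_assoc]

end MinimalIdempotents

section YoungSymmetrizers

variable {k : ℕ} {lam mu : ℕ → ℕ} {t s : Fin k → ℕ × ℕ}

/-- The sum of the row group of a numbering of boxes. -/
def rowSum (t : Fin k → ℕ × ℕ) : MonoidAlgebra ℂ (Equiv.Perm (Fin k)) :=
  signedSum 1 (labelStabilizer fun j => (t j).1)

/-- The signed sum of the column group of a numbering of boxes. -/
def colSum (t : Fin k → ℕ × ℕ) : MonoidAlgebra ℂ (Equiv.Perm (Fin k)) :=
  signedSum Equiv.Perm.sign (labelStabilizer fun j => (t j).2)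

lemma youngSym_eq_colSum_mul_rowSum (t : Fin k → ℕ × ℕ) : youngSym k t = colSum t * rowSum t := by
  simp [youngSym, colSum, rowSum, signedSum, mem_labelStabilizer]

lemma colSum_mul_single_mul_rowSum_eq_zero {σ : Equiv.Perm (Fin k)}
    (hσ : ¬ Function.Injective fun j => ((t j).1, (s (σ j)).2)) :
    colSum s * MonoidAlgebra.single σ 1 * rowSum t = 0 := by
  simp only [Function.not_injective_iff, Prod.mk.injEq] at hσ
  obtain ⟨i, j, ⟨hrow, hcol⟩, hij⟩ := hσ
  have hconj : σ * Equiv.swap i j * σ⁻¹ = Equiv.swap (σ i) (σ j) := by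
    rw [Equiv.mul_swap_eq_swap_mul, mul_inv_cancel_right]
  refine signedSum_mul_single_mul_signedSum_eq_zero σ
    (swap_mem_labelStabilizer (f := fun j => (t j).1) hrow) ?_ ?_
  · rw [hconj]
    exact swap_mem_labelStabilizer (f := fun j => (s j).2) hcol
  · simp [Equiv.Perm.sign_swap hij]

lemma rowSum_mul_single_inv_mul_colSum_eq_zero {σ : Equiv.Perm (Fin k)}
    (hσ : ¬ Function.Injective fun j => ((t j).1, (s (σ j)).2)) :
    rowSum t * MonoidAlgebra.single σ⁻¹ 1 * colSum s = 0 := by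
  simp only [Function.not_injective_iff, Prod.mk.injEq] at hσ
  obtain ⟨i, j, ⟨hrow, hcol⟩, hij⟩ := hσ
  have hconj : σ⁻¹ * Equiv.swap (σ i) (σ j) * σ⁻¹⁻¹ = Equiv.swap i j := by
    rw [Equiv.mul_swap_eq_swap_mul, mul_inv_cancel_right]
    simp
  refine signedSum_mul_single_mul_signedSum_eq_zero σ⁻¹
    (swap_mem_labelStabilizer (f := fun j => (s j).2) hcol) ?_ ?_
  · rw [hconj]
    exact swap_mem_labelStabilizer (f := fun j => (t j).1) hrow
  · simp [Equiv.Perm.sign_swap (σ.injective.ne hij)]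

namespace IsTableau

lemma exists_colSum_mul_mul_rowSum_eq_smul (ht : IsTableau k lam t)
    (x : MonoidAlgebra ℂ (Equiv.Perm (Fin k))) :
    ∃ c : ℂ, colSum t * x * rowSum t = c • youngSym k t := by
  simp only [eq_comm (a := colSum t * x * rowSum t)]
  refine Submodule.mem_span_singleton.1 (mul_mul_mem_of_single_mem (fun σ => ?_) x)
  by_cases hσ : Function.Injective fun j => ((t j).1, (t (σ j)).2)
  · obtain ⟨c, hc, r, hr, rfl⟩ := ht.exists_eq_mul_of_injective hσ
    have hsingle : MonoidAlgebra.single (c * r) (1 : ℂ) =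
        MonoidAlgebra.single c 1 * MonoidAlgebra.single r 1 := by
      rw [MonoidAlgebra.single_mul_single, mul_one]
    rw [hsingle, ← mul_assoc, mul_assoc _ _ (rowSum t), colSum, rowSum, signedSum_mul_single hc,
      single_mul_signedSum hr, smul_mul_smul_comm, ← colSum, ← rowSum,
      ← youngSym_eq_colSum_mul_rowSum]
    exact Submodule.smul_mem _ _ (Submodule.mem_span_singleton_self _)
  · rw [colSum_mul_single_mul_rowSum_eq_zero hσ]
    exact Submodule.zero_mem _

lemma exists_youngSym_mul_mul_youngSym_eq_smul (ht : IsTableau k lam t)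
    (x : MonoidAlgebra ℂ (Equiv.Perm (Fin k))) :
    ∃ c : ℂ, youngSym k t * x * youngSym k t = c • youngSym k t := by
  obtain ⟨c, hc⟩ := ht.exists_colSum_mul_mul_rowSum_eq_smul (rowSum t * x * colSum t)
  refine ⟨c, hc ▸ ?_⟩
  simp only [youngSym_eq_colSum_mul_rowSum, mul_assoc]

lemma youngSym_mul_mul_youngSym_eq_zero (ht : IsTableau k lam t) (hs : IsTableau k mu s) {N : ℕ}
    (hN : ∑ r ∈ range k, min (lam r) N < ∑ r ∈ range k, min (mu r) N)
    (x : MonoidAlgebra ℂ (Equiv.Perm (Fin k))) : youngSym k t * x * youngSym k s = 0 := by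
  have hmid : rowSum t * x * colSum s ∈
      (⊥ : Submodule ℂ (MonoidAlgebra ℂ (Equiv.Perm (Fin k)))) := by
    refine mul_mul_mem_of_single_mem (fun σ => ?_) x
    rw [← inv_inv σ, rowSum_mul_single_inv_mul_colSum_eq_zero, Submodule.mem_bot]
    exact fun hσ => hN.not_ge (sum_min_le_sum_min_of_injective ht hs hσ N)
  calc youngSym k t * x * youngSym k s
      = colSum t * (rowSum t * x * colSum s) * rowSum s := by
        simp only [youngSym_eq_colSum_mul_rowSum, mul_assoc]
    _ = 0 := by rw [(Submodule.mem_bot ℂ).1 hmid, mul_zero, zero_mul]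

lemma coeff_youngSym_one (ht : IsTableau k lam t) : (youngSym k t).coeff 1 = 1 := by
  rw [youngSym_eq_colSum_mul_rowSum, coeff_mul_eq_sum, Finset.sum_eq_single 1]
  · simp [colSum, rowSum, coeff_signedSum, one_mem]
  · intro g _ hg
    rw [colSum, rowSum, coeff_signedSum, coeff_signedSum]
    split_ifs with hcol hrow
    · rw [mul_one, inv_mem_iff] at hrow
      exact absurd (Equiv.ext fun j => ht.injective (Prod.ext (hrow j) (hcol j))) hg
    all_goals simp
  · simp

end IsTableau

lemma star_coeff_youngSym (t : Fin k → ℕ × ℕ) (g : Equiv.Perm (Fin k)) :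
    star ((youngSym k t).coeff g) = (youngSym k t).coeff g := by
  have hreal (χ : Equiv.Perm (Fin k) →* ℤˣ) (H) (h) :
      star ((signedSum χ H).coeff h) = (signedSum χ H).coeff h := by
    rw [coeff_signedSum]
    split_ifs <;> simp
  simp only [youngSym_eq_colSum_mul_rowSum, colSum, rowSum, coeff_mul_eq_sum, star_sum, star_mul',
    hreal]

/-- The idempotent multiple of the Young symmetrizer `e(t)`: if `t` is a tableau then
`e(t) * e(t) = n • e(t)`, where `n` is the coefficient of `e(t) * e(t)` at the identity. -/
def youngIdempotent (k : ℕ) (t : Fin k → ℕ × ℕ) : MonoidAlgebra ℂ (Equiv.Perm (Fin k)) :=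
  ((youngSym k t * youngSym k t).coeff 1)⁻¹ • youngSym k t

lemma star_coeff_youngIdempotent (t : Fin k → ℕ × ℕ) (g : Equiv.Perm (Fin k)) :
    star ((youngIdempotent k t).coeff g) = (youngIdempotent k t).coeff g := by
  simp only [youngIdempotent, coeff_mul_eq_sum, MonoidAlgebra.coeff_smul_apply, smul_eq_mul,
    star_mul', star_inv₀, star_sum, star_coeff_youngSym]

lemma isConj_inv_self (π : Equiv.Perm (Fin k)) : IsConj π⁻¹ π :=
  Equiv.Perm.isConj_of_cycleType_eq (Equiv.Perm.cycleType_inv π)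

namespace IsTableau

lemma isMinimalIdempotent_youngIdempotent (ht : IsTableau k lam t) :
    IsMinimalIdempotent (youngIdempotent k t) := by
  obtain ⟨c, hc⟩ := ht.exists_youngSym_mul_mul_youngSym_eq_smul 1
  rw [mul_one] at hc
  refine isMinimalIdempotent_inv_smul (by simp [ht.coeff_youngSym_one]) ?_
    ht.exists_youngSym_mul_mul_youngSym_eq_smul
  simp [hc, ht.coeff_youngSym_one]

lemma youngIdeal_eq_range_mulRight (ht : IsTableau k lam t) :
    youngIdeal k t = LinearMap.range (LinearMap.mulRight ℂ (youngIdempotent k t)) := by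
  have hn : ((youngSym k t * youngSym k t).coeff 1)⁻¹ ≠ 0 := fun h =>
    ht.isMinimalIdempotent_youngIdempotent.ne_zero (by rw [youngIdempotent, h, zero_smul])
  rw [youngIdeal, ← LinearMap.range_smul _ _ hn]
  congr 1
  refine LinearMap.ext fun x => ?_
  simp [youngIdempotent]

lemma youngIdealChar_eq (ht : IsTableau k lam t) (π : Equiv.Perm (Fin k)) :
    youngIdealChar k t π = ((youngIdempotent k t).coeff 1)⁻¹ *
      (centralProjector (youngIdempotent k t)).coeff π := by
  set p := youngIdempotent k t with hp
  have hpmin := ht.isMinimalIdempotent_youngIdempotent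
  let f := LinearMap.mulLeft ℂ (MonoidAlgebra.single π (1 : ℂ)) ∘ₗ LinearMap.mulRight ℂ p
  have hf : ∀ x, f x ∈ youngIdeal k t := fun x => by
    rw [ht.youngIdeal_eq_range_mulRight]
    exact ⟨MonoidAlgebra.single π 1 * x, by simp [f, mul_assoc, hp]⟩
  have hrestrict : youngIdealChar k t π = LinearMap.trace ℂ _ f := by
    rw [← LinearMap.trace_restrict_eq_of_forall_mem (youngIdeal k t) f hf, youngIdealChar]
    congr 1
    ext ⟨x, hx⟩
    obtain ⟨y, rfl⟩ := ht.youngIdeal_eq_range_mulRight ▸ hx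
    simp [f, mul_assoc, (hp ▸ hpmin.isIdempotentElem : IsIdempotentElem p).eq, ← hp]
  rw [hrestrict, trace_mulLeft_single_comp_mulRight, ← coeff_centralProjector_eq_of_isConj
    (isConj_inv_self π), coeff_centralProjector,
    inv_mul_cancel_left₀ hpmin.coeff_one_ne_zero]

end IsTableau

end YoungSymmetrizers

section Completeness

lemma linearIndependent_of_orthogonalIdempotents {K A ι : Type*} [Field K] [Ring A] [Algebra K A]
    [Finite ι] {e : ι → A} (he : OrthogonalIdempotents e) (hne : ∀ i, e i ≠ 0) :
    LinearIndependent K e := by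
  classical
  have := Fintype.ofFinite ι
  refine Fintype.linearIndependent_iff.2 fun c hc i => ?_
  have hmul := congrArg (e i * ·) hc
  simpa [Finset.mul_sum, he.mul_eq, hne] using hmul

lemma sum_eq_one_of_orthogonalIdempotents {K A ι : Type*} [Field K] [Ring A] [Algebra K A]
    [Fintype ι] {e : ι → A} (he : OrthogonalIdempotents e) (hne : ∀ i, e i ≠ 0)
    {S : Submodule K A} [FiniteDimensional K S] (hone : 1 ∈ S) (heS : ∀ i, e i ∈ S)
    (hS : Module.finrank K S ≤ Fintype.card ι) : ∑ i, e i = 1 := by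
  classical
  have hspan : Submodule.span K (Set.range e) = S := by
    refine Submodule.eq_of_le_of_finrank_le (Submodule.span_le.2 (Set.range_subset_iff.2 heS)) ?_
    rwa [finrank_span_eq_card (linearIndependent_of_orthogonalIdempotents he hne)]
  obtain ⟨c, hc⟩ := Submodule.mem_span_range_iff_exists_fun K |>.1 (hspan ▸ hone)
  refine Eq.trans (Finset.sum_congr rfl fun i _ => ?_) hc
  calc e i = e i * ∑ j, c j • e j := by rw [hc, mul_one]
    _ = c i • e i := by simp [Finset.mul_sum, he.mul_eq]

section Center

variable {G : Type*} [Group G]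

lemma coeff_eq_of_isConj_of_mem_center {x : MonoidAlgebra ℂ G}
    (hx : x ∈ Subalgebra.center ℂ (MonoidAlgebra ℂ G)) {g h : G} (hgh : IsConj g h) :
    x.coeff g = x.coeff h := by
  obtain ⟨c, rfl⟩ := isConj_iff.1 hgh
  have hcomm := Subalgebra.mem_center_iff.1 hx (MonoidAlgebra.single c 1)
  have hcoeff := congrArg (fun y : MonoidAlgebra ℂ G => y.coeff (c * g)) hcomm
  simpa using hcoeff

lemma finrank_center_le_card_conjClasses [Finite G] :
    Module.finrank ℂ (Subalgebra.center ℂ (MonoidAlgebra ℂ G)) ≤ Nat.card (ConjClasses G) := by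
  have := Fintype.ofFinite (ConjClasses G)
  let f : Subalgebra.center ℂ (MonoidAlgebra ℂ G) →ₗ[ℂ] ConjClasses G → ℂ :=
    { toFun x c := x.1.coeff (Quotient.out c)
      map_add' x y := by ext c; simp
      map_smul' a x := by ext c; simp }
  have hf : Function.Injective f := fun x y hxy => by
    ext g
    have hout : IsConj (Quotient.out (ConjClasses.mk g)) g :=
      ConjClasses.mk_eq_mk_iff_isConj.1 (Quotient.out_eq _)
    rw [← coeff_eq_of_isConj_of_mem_center x.2 hout, ← coeff_eq_of_isConj_of_mem_center y.2 hout]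
    exact congrFun hxy _
  refine (LinearMap.finrank_le_finrank_of_injective hf).trans ?_
  rw [Module.finrank_fintype_fun_eq_card, Nat.card_eq_fintype_card]

end Center

variable {k : ℕ}

lemma card_conjClasses_perm_le (k : ℕ) :
    Nat.card (ConjClasses (Equiv.Perm (Fin k))) ≤ Fintype.card (Nat.Partition k) := by
  have hcard : Fintype.card (Nat.Partition k) =
      Nat.card (Nat.Partition (Fintype.card (Fin k))) := by
    rw [Fintype.card_fin, Nat.card_eq_fintype_card]
  rw [hcard]
  refine Nat.card_le_card_of_injective (Quotient.lift Equiv.Perm.partition fun _ _ =>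
    Equiv.Perm.partition_eq_of_isConj.1) ?_
  rintro ⟨π⟩ ⟨τ⟩ h
  exact Quotient.sound (Equiv.Perm.partition_eq_of_isConj.2 h)

/-- The row lengths of the Young diagram whose columns have the parts of `p` as lengths. The
transposition, harmless because all partitions of `k` are used together, avoids sorting the
parts. -/
def rowLength (p : Nat.Partition k) (i : ℕ) : ℕ := (p.parts.filter (i < ·)).card

lemma sum_card_filter_lt (s : Multiset ℕ) {K : ℕ} (h : ∀ a ∈ s, a ≤ K) :
    ∑ i ∈ range K, (s.filter (i < ·)).card = s.sum := by
  induction s using Multiset.induction_on with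
  | empty => simp
  | cons a s ih =>
    obtain ⟨ha, hs⟩ := Multiset.forall_mem_cons.1 h
    have hcard : #{i ∈ range K | i < a} = a := by
      rw [← Finset.card_range a]
      congr 1
      ext i
      simpa using fun hi : i < a => hi.trans_le ha
    simp only [← Multiset.countP_eq_card_filter, Multiset.countP_cons] at ih ⊢
    rw [Finset.sum_add_distrib, ih hs, Finset.sum_boole, hcard, Multiset.sum_cons, add_comm,
      Nat.cast_id]

lemma isPartitionOf_rowLength (p : Nat.Partition k) : IsPartitionOf k (rowLength p) := by
  have hle : ∀ a ∈ p.parts, a ≤ k := fun a ha => p.parts_sum ▸ Multiset.le_sum_of_mem ha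
  refine ⟨fun i j hij => ?_, fun i hi => ?_, (sum_card_filter_lt _ hle).trans p.parts_sum⟩
  · exact Multiset.card_le_card (Multiset.monotone_filter_right _ fun _ h => hij.trans_lt h)
  · rw [rowLength, Multiset.card_eq_zero, Multiset.filter_eq_nil]
    exact fun a ha => ((hle a ha).trans hi).not_gt

lemma rowLength_eq_count_add (p : Nat.Partition k) (i : ℕ) :
    rowLength p i = p.parts.count (i + 1) + rowLength p (i + 1) := by
  simp only [rowLength, ← Multiset.countP_eq_card_filter, Multiset.count]
  induction p.parts using Multiset.induction_on with
  | empty => simp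
  | cons a s ih =>
    simp only [Multiset.countP_cons, ih]
    split_ifs <;> omega

lemma rowLength_injective : Function.Injective (rowLength : Nat.Partition k → ℕ → ℕ) := by
  intro p q h
  refine Nat.Partition.ext (Multiset.ext.2 fun a => ?_)
  rcases a with _ | i
  · rw [Multiset.count_eq_zero_of_notMem fun h0 => (p.parts_pos h0).false,
      Multiset.count_eq_zero_of_notMem fun h0 => (q.parts_pos h0).false]
  · have hp := rowLength_eq_count_add p i
    rw [h, rowLength_eq_count_add q i, Nat.add_right_cancel_iff] at hp
    exact hp.symm

lemma exists_isTableau {lam : ℕ → ℕ} (h : IsPartitionOf k lam) :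
    ∃ t : Fin k → ℕ × ℕ, IsTableau k lam t := by
  have hrow : ∀ i, #{j ∈ range k | j < lam i} = lam i := fun i => by
    rw [← Finset.card_range (lam i)]
    congr 1
    ext j
    simpa using fun hj : j < lam i => hj.trans_le (h.apply_le i)
  have hcard : #(youngCells k lam) = k := by
    rw [youngCells, Finset.card_filter, Finset.sum_product]
    simp only [← Finset.card_filter, hrow, h.2.2]
  let e := (Finset.equivFinOfCardEq hcard).symm
  exact ⟨fun j => e j, h, fun j _ => (e j).2, fun i _ j _ hij => e.injective (Subtype.ext hij),
    fun c hc => ⟨e.symm ⟨c, hc⟩, trivial, by simp⟩⟩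

/-- A chosen tableau of shape `rowLength p`. -/
def tableau (p : Nat.Partition k) : Fin k → ℕ × ℕ :=
  (exists_isTableau (isPartitionOf_rowLength p)).choose

lemma isTableau_tableau (p : Nat.Partition k) : IsTableau k (rowLength p) (tableau p) :=
  (exists_isTableau (isPartitionOf_rowLength p)).choose_spec

lemma isMinimalIdempotent_youngIdempotent_tableau (p : Nat.Partition k) :
    IsMinimalIdempotent (youngIdempotent k (tableau p)) :=
  (isTableau_tableau p).isMinimalIdempotent_youngIdempotent

/-- The central projector of `ℂ[S_k]` onto the isotypic component of shape `rowLength p`. -/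
def isotypicProjector (p : Nat.Partition k) : MonoidAlgebra ℂ (Equiv.Perm (Fin k)) :=
  centralProjector (youngIdempotent k (tableau p))

lemma isIdempotentElem_isotypicProjector (p : Nat.Partition k) :
    IsIdempotentElem (isotypicProjector p) :=
  (isMinimalIdempotent_youngIdempotent_tableau p).isIdempotentElem_centralProjector

lemma isSelfAdjointElem_isotypicProjector (p : Nat.Partition k) :
    IsSelfAdjointElem (isotypicProjector p) :=
  isSelfAdjointElem_centralProjector (star_coeff_youngIdempotent _) isConj_inv_self

lemma isotypicProjector_mul_eq_zero {p q : Nat.Partition k} (hpq : p ≠ q) :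
    isotypicProjector p * isotypicProjector q = 0 := by
  wlog hN : ∃ N, ∑ r ∈ range k, min (rowLength p r) N < ∑ r ∈ range k, min (rowLength q r) N
    generalizing p q
  · rw [isotypicProjector, (commute_centralProjector _ _).eq]
    refine this hpq.symm (by_contra fun hN' => hpq (rowLength_injective ?_))
    push Not at hN hN'
    exact (isPartitionOf_rowLength p).eq_of_sum_min_eq (isPartitionOf_rowLength q) fun N =>
      (hN' N).antisymm (hN N)
  obtain ⟨N, hN⟩ := hN
  refine centralProjector_mul_eq_zero fun x => ?_
  rw [youngIdempotent, youngIdempotent, smul_mul_assoc, smul_mul_smul_comm,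
    (isTableau_tableau p).youngSym_mul_mul_youngSym_eq_zero (isTableau_tableau q) hN, smul_zero]

lemma completeOrthogonalIdempotents_isotypicProjector (k : ℕ) :
    CompleteOrthogonalIdempotents (isotypicProjector (k := k)) := by
  have hortho : OrthogonalIdempotents (isotypicProjector (k := k)) :=
    ⟨isIdempotentElem_isotypicProjector, fun p q => isotypicProjector_mul_eq_zero⟩
  refine ⟨hortho, sum_eq_one_of_orthogonalIdempotents (K := ℂ) hortho
    (fun p => (isMinimalIdempotent_youngIdempotent_tableau p).centralProjector_ne_zero)
    (S := Subalgebra.toSubmodule (Subalgebra.center ℂ _)) (one_mem (Subalgebra.center ℂ _))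
    (fun p => ?_) (finrank_center_le_card_conjClasses.trans (card_conjClasses_perm_le k))⟩
  exact (Subalgebra.mem_center_iff (R := ℂ)).2 fun x => (commute_centralProjector _ x).eq.symm

end Completeness

section KroneckerProjector

lemma commute_mapDomainAlgHom {G H K : Type*} [Group G] [Finite G] [Group H] [Finite H] [Group K]
    {f₁ : G →* K} {f₂ : H →* K} (hcomm : ∀ g h, Commute (f₁ g) (f₂ h)) (x : MonoidAlgebra ℂ G)
    (y : MonoidAlgebra ℂ H) : Commute (MonoidAlgebra.mapDomainAlgHom ℂ ℂ f₁ x)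
      (MonoidAlgebra.mapDomainAlgHom ℂ ℂ f₂ y) := by
  have := Fintype.ofFinite G
  have := Fintype.ofFinite H
  rw [eq_sum_coeff_smul_single x, eq_sum_coeff_smul_single y, map_sum, map_sum]
  refine Commute.sum_left _ _ _ fun g _ => Commute.sum_right _ _ _ fun h _ => ?_
  rw [map_smul, map_smul]
  refine (Commute.smul_left ?_ _).smul_right _
  simp [Commute, SemiconjBy, MonoidAlgebra.single_mul_single, (hcomm g h).eq]

variable {G : Type*} [Group G]

/-- The embedding `x ↦ x ⊗ 1` of `ℂ[G]` into `ℂ[G × G] = ℂ[G] ⊗ ℂ[G]`. -/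
def inlAlgHom (G : Type*) [Group G] : MonoidAlgebra ℂ G →ₐ[ℂ] MonoidAlgebra ℂ (G × G) :=
  MonoidAlgebra.mapDomainAlgHom ℂ ℂ (MonoidHom.inl G G)

/-- The embedding `x ↦ 1 ⊗ x` of `ℂ[G]` into `ℂ[G × G] = ℂ[G] ⊗ ℂ[G]`. -/
def inrAlgHom (G : Type*) [Group G] : MonoidAlgebra ℂ G →ₐ[ℂ] MonoidAlgebra ℂ (G × G) :=
  MonoidAlgebra.mapDomainAlgHom ℂ ℂ (MonoidHom.inr G G)

/-- The diagonal embedding `g ↦ g ⊗ g` of `ℂ[G]` into `ℂ[G × G]`. -/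
def diagAlgHom (G : Type*) [Group G] : MonoidAlgebra ℂ G →ₐ[ℂ] MonoidAlgebra ℂ (G × G) :=
  MonoidAlgebra.mapDomainAlgHom ℂ ℂ ((MonoidHom.id G).prod (MonoidHom.id G))

lemma inlAlgHom_single (g : G) (c : ℂ) :
    inlAlgHom G (MonoidAlgebra.single g c) = MonoidAlgebra.single (g, 1) c := by
  simp [inlAlgHom]

lemma inrAlgHom_single (g : G) (c : ℂ) :
    inrAlgHom G (MonoidAlgebra.single g c) = MonoidAlgebra.single (1, g) c := by
  simp [inrAlgHom]

lemma diagAlgHom_single (g : G) (c : ℂ) :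
    diagAlgHom G (MonoidAlgebra.single g c) = MonoidAlgebra.single (g, g) c := by
  simp [diagAlgHom]

lemma diagAlgHom_single_eq_mul (g : G) : diagAlgHom G (MonoidAlgebra.single g 1) =
    inlAlgHom G (MonoidAlgebra.single g 1) * inrAlgHom G (MonoidAlgebra.single g 1) := by
  simp [inlAlgHom_single, inrAlgHom_single, diagAlgHom_single, MonoidAlgebra.single_mul_single]

variable [Finite G]

lemma commute_inlAlgHom_inrAlgHom (x y : MonoidAlgebra ℂ G) :
    Commute (inlAlgHom G x) (inrAlgHom G y) :=
  commute_mapDomainAlgHom MonoidHom.commute_inl_inr x y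

lemma commute_inlAlgHom_diagAlgHom {x : MonoidAlgebra ℂ G} (hx : ∀ y, Commute x y)
    (y : MonoidAlgebra ℂ G) : Commute (inlAlgHom G x) (diagAlgHom G y) := by
  have := Fintype.ofFinite G
  rw [eq_sum_coeff_smul_single y, map_sum]
  refine Commute.sum_right _ _ _ fun g _ => ?_
  rw [map_smul, diagAlgHom_single_eq_mul]
  exact (((hx _).map _).mul_right (commute_inlAlgHom_inrAlgHom _ _)).smul_right _

lemma commute_inrAlgHom_diagAlgHom {x : MonoidAlgebra ℂ G} (hx : ∀ y, Commute x y)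
    (y : MonoidAlgebra ℂ G) : Commute (inrAlgHom G x) (diagAlgHom G y) := by
  have := Fintype.ofFinite G
  rw [eq_sum_coeff_smul_single y, map_sum]
  refine Commute.sum_right _ _ _ fun g _ => ?_
  rw [map_smul, diagAlgHom_single_eq_mul]
  exact ((commute_inlAlgHom_inrAlgHom _ _).symm.mul_right ((hx _).map _)).smul_right _

lemma coeff_inlAlgHom_mul_inrAlgHom (x y : MonoidAlgebra ℂ G) (g h : G) :
    (inlAlgHom G x * inrAlgHom G y).coeff (g, h) = x.coeff g * y.coeff h := by
  classical
  have := Fintype.ofFinite G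
  conv_lhs => rw [eq_sum_coeff_smul_single x, eq_sum_coeff_smul_single y]
  simp only [map_sum, map_smul, inlAlgHom_single, inrAlgHom_single, Finset.sum_mul_sum,
    smul_mul_smul_comm, MonoidAlgebra.single_mul_single, MonoidAlgebra.coeff_sum,
    Finsupp.finsetSum_apply, MonoidAlgebra.coeff_smul, MonoidAlgebra.coeff_single]
  simp [Finsupp.single_apply, ite_and]

/-- For central idempotents `P`, `Q`, `R`, the projection onto the part of the `Q ⊗ R`-isotypic
component of a representation of `G × G` that is `P`-isotypic for the diagonal action of `G`. -/
def tripleProjector (P Q R : MonoidAlgebra ℂ G) : MonoidAlgebra ℂ (G × G) :=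
  inlAlgHom G Q * inrAlgHom G R * diagAlgHom G P

omit [Finite G] in
lemma coeff_one_tripleProjector [Fintype G] (P Q R : MonoidAlgebra ℂ G) :
    (tripleProjector P Q R).coeff 1 = ∑ g, P.coeff g * (Q.coeff g⁻¹ * R.coeff g⁻¹) := by
  rw [tripleProjector, coeff_mul_one_comm, eq_sum_coeff_smul_single P, map_sum, Finset.sum_mul,
    MonoidAlgebra.coeff_sum, Finsupp.finsetSum_apply]
  refine Finset.sum_congr rfl fun g _ => ?_
  rw [map_smul, diagAlgHom_single, smul_mul_assoc, MonoidAlgebra.coeff_smul_apply, smul_eq_mul,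
    ← coeff_inlAlgHom_mul_inrAlgHom, ← eq_sum_coeff_smul_single]
  simp

lemma isIdempotentElem_tripleProjector {P Q R : MonoidAlgebra ℂ G} (hP : IsIdempotentElem P)
    (hQ : IsIdempotentElem Q) (hR : IsIdempotentElem R) (hQc : ∀ x, Commute Q x)
    (hRc : ∀ x, Commute R x) : IsIdempotentElem (tripleProjector P Q R) :=
  ((hQ.map (inlAlgHom G)).mul_of_commute (commute_inlAlgHom_inrAlgHom Q R)
    (hR.map (inrAlgHom G))).mul_of_commute ((commute_inlAlgHom_diagAlgHom hQc P).mul_left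
      (commute_inrAlgHom_diagAlgHom hRc P)) (hP.map (diagAlgHom G))

lemma isStarProjection_permRep_tripleProjector {P Q R : MonoidAlgebra ℂ G}
    {X : Type*} [Fintype X] [DecidableEq X] (act : G × G →* Equiv.Perm X)
    (hP : IsIdempotentElem P) (hQ : IsIdempotentElem Q) (hR : IsIdempotentElem R)
    (hPs : IsSelfAdjointElem P) (hQs : IsSelfAdjointElem Q) (hRs : IsSelfAdjointElem R)
    (hQc : ∀ x, Commute Q x) (hRc : ∀ x, Commute R x) :
    IsStarProjection (permRep act (tripleProjector P Q R)) := by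
  have hproj {x : MonoidAlgebra ℂ G} (hx : IsIdempotentElem x) (hxs : IsSelfAdjointElem x)
      (f : G →* G × G) :
      IsStarProjection (permRep act (MonoidAlgebra.mapDomainAlgHom ℂ ℂ f x)) := by
    rw [permRep_mapDomain]
    exact hxs.isStarProjection_permRep hx _
  rw [tripleProjector, map_mul, map_mul]
  refine ((hproj hQ hQs _).mul (hproj hR hRs _) ?_).mul (hproj hP hPs _) ?_
  · exact (commute_inlAlgHom_inrAlgHom Q R).map _
  · rw [← map_mul]
    exact ((commute_inlAlgHom_diagAlgHom hQc P).mul_left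
      (commute_inrAlgHom_diagAlgHom hRc P)).map _

end KroneckerProjector

section KroneckerCoefficient

variable {k : ℕ}

/-- The projector `tripleProjector` for the isotypic projectors of `p`, `q`, `r`. -/
def isotypicTripleProjector (p q r : Nat.Partition k) :
    MonoidAlgebra ℂ (Equiv.Perm (Fin k) × Equiv.Perm (Fin k)) :=
  tripleProjector (isotypicProjector p) (isotypicProjector q) (isotypicProjector r)

lemma coeff_isotypicProjector_inv (p : Nat.Partition k) (π : Equiv.Perm (Fin k)) :
    (isotypicProjector p).coeff π⁻¹ = (isotypicProjector p).coeff π :=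
  coeff_centralProjector_eq_of_isConj (isConj_inv_self π)

/-- The multiplicity of an irreducible representation in a tensor product vanishes only if
the corresponding projector does, since the value of the projector at `1` is a nonzero multiple
of `∑ χ_p χ_q χ_r`. -/
lemma kronecker_ne_zero {chi : (k : ℕ) → (ℕ → ℕ) → Equiv.Perm (Fin k) → ℂ}
    (hchi : IsCharacterFamily chi) {g : (k : ℕ) → (ℕ → ℕ) → (ℕ → ℕ) → (ℕ → ℕ) → ℕ}
    (hg : IsKroneckerFamily chi g) {p q r : Nat.Partition k}
    (hpqr : isotypicTripleProjector p q r ≠ 0) :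
    g k (rowLength p) (rowLength q) (rowLength r) ≠ 0 := by
  intro hzero
  have hchar (s : Nat.Partition k) (π : Equiv.Perm (Fin k)) : chi k (rowLength s) π =
      ((youngIdempotent k (tableau s)).coeff 1)⁻¹ * (isotypicProjector s).coeff π :=
    (hchi k _ (isPartitionOf_rowLength s) _ (isTableau_tableau s).bijOn π).trans
      ((isTableau_tableau s).youngIdealChar_eq π)
  have hsum := hg k _ _ _ (isPartitionOf_rowLength p) (isPartitionOf_rowLength q)
    (isPartitionOf_rowLength r)
  have hfactor (a b c x y z : ℂ) : a * x * (b * y) * (c * z) = a * b * c * (x * y * z) := by ring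
  simp only [hzero, hchar, hfactor, ← Finset.mul_sum] at hsum
  have hne (s : Nat.Partition k) : (youngIdempotent k (tableau s)).coeff 1 ≠ 0 :=
    (isMinimalIdempotent_youngIdempotent_tableau s).coeff_one_ne_zero
  refine hpqr (eq_zero_of_coeff_one_eq_zero ?_ ?_)
  · exact isIdempotentElem_tripleProjector (isIdempotentElem_isotypicProjector p)
      (isIdempotentElem_isotypicProjector q) (isIdempotentElem_isotypicProjector r)
      (commute_centralProjector _) (commute_centralProjector _)
  · rw [isotypicTripleProjector, coeff_one_tripleProjector]
    simp only [coeff_isotypicProjector_inv, ← mul_assoc]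
    simpa [hne, Nat.factorial_ne_zero, eq_comm (a := (0 : ℂ))] using hsum

end KroneckerCoefficient

section Words

/-- The action of the permutations of the positions `J` on the words in the alphabet `α`. -/
def wordAction (J α : Type*) : Equiv.Perm J →* Equiv.Perm (J → α) :=
  letI := arrowAction (G := Equiv.Perm J) (A := J) (B := α)
  MulAction.toPermHom (Equiv.Perm J) (J → α)

lemma wordAction_apply {J α : Type*} (π : Equiv.Perm J) (w : J → α) (j : J) :
    wordAction J α π w j = w (π⁻¹ j) :=
  rfl

lemma wordAction_symm_apply {J α : Type*} (π : Equiv.Perm J) (w : J → α) (j : J) :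
    (wordAction J α π).symm w j = w (π j) :=
  rfl

variable {J α β γ : Type*} [Fintype J]

/-- The `J`-fold tensor power of a matrix, with rows and columns indexed by words. -/
def tensorPower (J : Type*) [Fintype J] (M : Matrix α β ℂ) : Matrix (J → α) (J → β) ℂ :=
  Matrix.of fun v w => ∏ j, M (v j) (w j)

lemma tensorPower_apply (M : Matrix α β ℂ) (v : J → α) (w : J → β) :
    tensorPower J M v w = ∏ j, M (v j) (w j) :=
  rfl

lemma conjTranspose_tensorPower (M : Matrix α β ℂ) :
    (tensorPower J M)ᴴ = tensorPower J Mᴴ := by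
  ext v w
  simp [tensorPower_apply]

lemma tensorPower_diagonal [DecidableEq α] (d : α → ℂ) :
    tensorPower J (diagonal d) = diagonal fun w => ∏ j, d (w j) := by
  ext v w
  simp [tensorPower_apply, diagonal_apply, Finset.prod_ite_zero, funext_iff]

lemma tensorPower_one [DecidableEq α] : tensorPower J (1 : Matrix α α ℂ) = 1 := by
  simp [← diagonal_one, tensorPower_diagonal]

variable [DecidableEq J]

lemma tensorPower_mul [Fintype β] (M : Matrix α β ℂ) (N : Matrix β γ ℂ) :
    tensorPower J (M * N) = tensorPower J M * tensorPower J N := by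
  ext v w
  simp [tensorPower_apply, Matrix.mul_apply, Finset.prod_univ_sum, Finset.prod_mul_distrib]

lemma trace_tensorPower [Fintype α] (M : Matrix α α ℂ) :
    (tensorPower J M).trace = M.trace ^ Fintype.card J := by
  simp [Matrix.trace, tensorPower_apply, ← Finset.card_univ, ← Finset.prod_const,
    Finset.prod_univ_sum]

omit [DecidableEq J] in
open scoped MatrixOrder Matrix.Norms.L2Operator in
lemma posSemidef_tensorPower [Finite α] {M : Matrix α α ℂ} (hM : M.PosSemidef) :
    (tensorPower J M).PosSemidef := by
  classical
  have := Fintype.ofFinite α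
  obtain ⟨B, rfl⟩ := CStarAlgebra.nonneg_iff_eq_star_mul_self.1 (Matrix.nonneg_iff_posSemidef.2 hM)
  rw [star_eq_conjTranspose, tensorPower_mul, ← conjTranspose_tensorPower]
  exact posSemidef_conjTranspose_mul_self _

variable [Fintype α] [DecidableEq α] [Fintype β] [DecidableEq β]

lemma permRep_wordAction_mul_tensorPower (x : MonoidAlgebra ℂ (Equiv.Perm J)) (M : Matrix α β ℂ) :
    permRep (wordAction J α) x * tensorPower J M =
      tensorPower J M * permRep (wordAction J β) x := by
  have hsingle (π : Equiv.Perm J) :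
      permRep (wordAction J α) (MonoidAlgebra.single π 1) * tensorPower J M =
        tensorPower J M * permRep (wordAction J β) (MonoidAlgebra.single π 1) := by
    ext v w
    simp only [← (wordAction J α π).eq_symm_apply, Matrix.mul_apply, permRep_single,
      ite_mul, mul_ite, one_mul, mul_one, zero_mul, mul_zero, Finset.sum_ite_eq,
      Finset.sum_ite_eq', Finset.mem_univ, if_true, tensorPower_apply]
    refine Fintype.prod_equiv π _ _ fun j => ?_
    simp [wordAction_apply, wordAction_symm_apply]
  rw [eq_sum_coeff_smul_single x]
  simp only [map_sum, map_smul, Matrix.sum_mul, Matrix.mul_sum, Matrix.smul_mul, Matrix.mul_smul,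
    hsingle]

lemma trace_permRep_mul_tensorPower_conj (x : MonoidAlgebra ℂ (Equiv.Perm J)) {V : Matrix α β ℂ}
    {W : Matrix β α ℂ} (hWV : W * V = 1) (D : Matrix β β ℂ) :
    (permRep (wordAction J α) x * tensorPower J (V * D * W)).trace =
      (permRep (wordAction J β) x * tensorPower J D).trace := by
  rw [tensorPower_mul, tensorPower_mul, ← Matrix.mul_assoc, ← Matrix.mul_assoc,
    permRep_wordAction_mul_tensorPower, Matrix.trace_mul_comm, ← Matrix.mul_assoc,
    ← Matrix.mul_assoc, ← tensorPower_mul, hWV, tensorPower_one, Matrix.one_mul]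

lemma trace_permRep_mul_tensorPower_eq_diagonal (x : MonoidAlgebra ℂ (Equiv.Perm J))
    {M : Matrix α α ℂ} (hM : M.IsHermitian) (e : β ≃ α) :
    (permRep (wordAction J α) x * tensorPower J M).trace =
      (permRep (wordAction J β) x *
        tensorPower J (diagonal fun i => (hM.eigenvalues (e i) : ℂ))).trace := by
  set U : Matrix α α ℂ := hM.eigenvectorUnitary.1
  have hUU : Uᴴ * U = 1 := Matrix.mem_unitaryGroup_iff'.1 hM.eigenvectorUnitary.2
  have hspec : M = U * diagonal (fun i => (hM.eigenvalues i : ℂ)) * Uᴴ := by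
    simpa [Unitary.conjStarAlgAut_apply, star_eq_conjTranspose, Function.comp_def] using
      hM.spectral_theorem
  have hVW : Uᴴ.submatrix e id * U.submatrix id e = 1 := by
    rw [← submatrix_mul _ _ _ _ _ Function.bijective_id, hUU, submatrix_one_equiv]
  rw [← trace_permRep_mul_tensorPower_conj x hVW,
    show (diagonal fun i => (hM.eigenvalues (e i) : ℂ)) =
      (diagonal fun i => (hM.eigenvalues i : ℂ)).submatrix e e by
        simp [submatrix_diagonal_equiv, Function.comp_def],
    submatrix_mul_equiv, submatrix_mul_equiv, ← hspec, submatrix_id_id]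

end Words

section Bipartite

variable {J A B : Type*}

/-- The action of pairs of permutations of the positions on the words in `A × B`, the first
permutation moving the letters in `A` and the second one the letters in `B`. -/
def bipartiteAction (J A B : Type*) :
    Equiv.Perm J × Equiv.Perm J →* Equiv.Perm (J → A × B) where
  toFun π := (Equiv.arrowProdEquivProdArrow J (fun _ => A) fun _ => B).symm.permCongr
    (Equiv.prodCongr (wordAction J A π.1) (wordAction J B π.2))
  map_one' := by
    ext <;> simp
  map_mul' _ _ := by
    ext <;> simp

lemma bipartiteAction_apply (π : Equiv.Perm J × Equiv.Perm J) (w : J → A × B) (j : J) :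
    bipartiteAction J A B π w j = ((w (π.1⁻¹ j)).1, (w (π.2⁻¹ j)).2) :=
  rfl

lemma trace_permRep_mul {G X : Type*} [Group G] [Fintype G] [Fintype X] [DecidableEq X]
    (act : G →* Equiv.Perm X) (x : MonoidAlgebra ℂ G) (N : Matrix X X ℂ) :
    (permRep act x * N).trace = ∑ g, x.coeff g * ∑ v, N v (act g v) := by
  simp only [Matrix.trace, diag_apply, Matrix.mul_apply, permRep_apply, Finset.sum_mul,
    Finset.mul_sum, ite_mul, zero_mul]
  rw [Finset.sum_comm]
  simp only [Finset.sum_comm (s := (univ : Finset X)) (t := (univ : Finset G))]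
  simp

variable [Fintype J] [DecidableEq J] [Fintype A] [DecidableEq A] [Fintype B] [DecidableEq B]
  {ρ : Matrix (A × B) (A × B) ℂ}

lemma permRep_bipartiteAction_diagAlgHom (x : MonoidAlgebra ℂ (Equiv.Perm J)) :
    permRep (bipartiteAction J A B) (diagAlgHom _ x) = permRep (wordAction J (A × B)) x :=
  permRep_mapDomain _ _ _

lemma trace_permRep_inlAlgHom_mul_tensorPower {ρA : Matrix A A ℂ}
    (hρA : ∀ a a', ρA a a' = ∑ b, ρ (a, b) (a', b)) (x : MonoidAlgebra ℂ (Equiv.Perm J)) :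
    (permRep (bipartiteAction J A B) (inlAlgHom _ x) * tensorPower J ρ).trace =
      (permRep (wordAction J A) x * tensorPower J ρA).trace := by
  rw [inlAlgHom, permRep_mapDomain, trace_permRep_mul, trace_permRep_mul]
  refine Finset.sum_congr rfl fun π _ => congrArg _ ?_
  rw [← (Equiv.arrowProdEquivProdArrow J (fun _ => A) fun _ => B).symm.sum_comp,
    Fintype.sum_prod_type]
  refine Finset.sum_congr rfl fun w _ => ?_
  simp [tensorPower_apply, hρA, Finset.prod_univ_sum, bipartiteAction_apply, wordAction_apply,
    Equiv.arrowProdEquivProdArrow]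

lemma trace_permRep_inrAlgHom_mul_tensorPower {ρB : Matrix B B ℂ}
    (hρB : ∀ b b', ρB b b' = ∑ a, ρ (a, b) (a, b')) (x : MonoidAlgebra ℂ (Equiv.Perm J)) :
    (permRep (bipartiteAction J A B) (inrAlgHom _ x) * tensorPower J ρ).trace =
      (permRep (wordAction J B) x * tensorPower J ρB).trace := by
  rw [inrAlgHom, permRep_mapDomain, trace_permRep_mul, trace_permRep_mul]
  refine Finset.sum_congr rfl fun π _ => congrArg _ ?_
  rw [← (Equiv.arrowProdEquivProdArrow J (fun _ => A) fun _ => B).symm.sum_comp,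
    Fintype.sum_prod_type_right]
  refine Finset.sum_congr rfl fun w _ => ?_
  simp [tensorPower_apply, hρB, Finset.prod_univ_sum, bipartiteAction_apply, wordAction_apply,
    Equiv.arrowProdEquivProdArrow]

end Bipartite

section Weights

lemma re_trace_mul_nonneg {X : Type*} [Fintype X] {P N : Matrix X X ℂ} (hP : IsStarProjection P)
    (hN : N.PosSemidef) : 0 ≤ (P * N).trace.re := by
  have htrace : (P * N).trace = (Pᴴ * N * P).trace := by
    rw [Matrix.trace_mul_comm (Pᴴ * N), ← mul_assoc, ← star_eq_conjTranspose,
      hP.isSelfAdjoint.star_eq, hP.isIdempotentElem.eq]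
  rw [htrace]
  exact (Complex.nonneg_iff.1 (hN.conjTranspose_mul_mul_same P).trace_nonneg).1

variable {k : ℕ} {α A B : Type*} [Fintype α] [DecidableEq α] [Fintype A] [DecidableEq A]
  [Fintype B] [DecidableEq B]

/-- The probability of the outcome `p` when the isotypic component is measured in the state
`M ^ ⊗ k`. -/
def isotypicWeight (M : Matrix α α ℂ) (p : Nat.Partition k) : ℝ :=
  (permRep (wordAction (Fin k) α) (isotypicProjector p) * tensorPower (Fin k) M).trace.re

/-- The joint probability of the outcomes `p`, `q`, `r` when the isotypic components for the
global permutations and for those of the two factors are measured in the state `ρ ^ ⊗ k`. -/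
def jointWeight (ρ : Matrix (A × B) (A × B) ℂ) (p q r : Nat.Partition k) : ℝ :=
  (permRep (bipartiteAction (Fin k) A B) (isotypicTripleProjector p q r) *
    tensorPower (Fin k) ρ).trace.re

lemma jointWeight_nonneg {ρ : Matrix (A × B) (A × B) ℂ} (hρ : ρ.PosSemidef)
    (p q r : Nat.Partition k) : 0 ≤ jointWeight ρ p q r :=
  re_trace_mul_nonneg (isStarProjection_permRep_tripleProjector _
    (isIdempotentElem_isotypicProjector p) (isIdempotentElem_isotypicProjector q)
    (isIdempotentElem_isotypicProjector r) (isSelfAdjointElem_isotypicProjector p)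
    (isSelfAdjointElem_isotypicProjector q) (isSelfAdjointElem_isotypicProjector r)
    (commute_centralProjector _) (commute_centralProjector _)) (posSemidef_tensorPower hρ)

lemma sum_re_trace_permRep_mul {ι G X : Type*} [Group G] [Fintype X] [DecidableEq X]
    (act : G →* Equiv.Perm X) (s : Finset ι) (x : ι → MonoidAlgebra ℂ G) (N : Matrix X X ℂ) :
    ∑ i ∈ s, (permRep act (x i) * N).trace.re = (permRep act (∑ i ∈ s, x i) * N).trace.re := by
  rw [map_sum, Finset.sum_mul, Matrix.trace_sum, Complex.re_sum]

lemma sum_isotypicWeight {M : Matrix α α ℂ} (hM : M.trace = 1) :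
    ∑ p : Nat.Partition k, isotypicWeight M p = 1 := by
  simp only [isotypicWeight, sum_re_trace_permRep_mul,
    (completeOrthogonalIdempotents_isotypicProjector k).complete, map_one, one_mul,
    trace_tensorPower, hM, one_pow, Complex.one_re]

lemma sum_sum_jointWeight_fst (ρ : Matrix (A × B) (A × B) ℂ) (p : Nat.Partition k) :
    ∑ q, ∑ r, jointWeight ρ p q r = isotypicWeight ρ p := by
  simp only [jointWeight, sum_re_trace_permRep_mul, isotypicTripleProjector, tripleProjector,
    ← Finset.sum_mul, ← Finset.mul_sum, ← map_sum,
    (completeOrthogonalIdempotents_isotypicProjector k).complete, map_one, one_mul,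
    permRep_bipartiteAction_diagAlgHom, isotypicWeight]

lemma sum_sum_jointWeight_snd {ρ : Matrix (A × B) (A × B) ℂ} {ρA : Matrix A A ℂ}
    (hρA : ∀ a a', ρA a a' = ∑ b, ρ (a, b) (a', b)) (q : Nat.Partition k) :
    ∑ p, ∑ r, jointWeight ρ p q r = isotypicWeight ρA q := by
  simp only [jointWeight, sum_re_trace_permRep_mul, isotypicTripleProjector, tripleProjector,
    ← Finset.sum_mul, ← Finset.mul_sum, ← map_sum,
    (completeOrthogonalIdempotents_isotypicProjector k).complete, map_one, mul_one,
    trace_permRep_inlAlgHom_mul_tensorPower hρA, isotypicWeight]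

lemma sum_sum_jointWeight_trd {ρ : Matrix (A × B) (A × B) ℂ} {ρB : Matrix B B ℂ}
    (hρB : ∀ b b', ρB b b' = ∑ a, ρ (a, b) (a, b')) (r : Nat.Partition k) :
    ∑ p, ∑ q, jointWeight ρ p q r = isotypicWeight ρB r := by
  simp only [jointWeight, sum_re_trace_permRep_mul, isotypicTripleProjector, tripleProjector,
    ← Finset.sum_mul, ← Finset.mul_sum, ← map_sum,
    (completeOrthogonalIdempotents_isotypicProjector k).complete, map_one, mul_one, one_mul,
    trace_permRep_inrAlgHom_mul_tensorPower hρB, isotypicWeight]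

lemma exists_ne_zero_of_sum_lt {ι κ η : Type*} [Fintype ι] [Fintype κ] [Fintype η]
    {f : ι → κ → η → ℝ} (hf : ∀ a b c, 0 ≤ f a b c) (s : Finset ι) (t : Finset κ) (u : Finset η)
    (h : ∑ a ∈ s, ∑ b, ∑ c, f a b c + ∑ b ∈ t, ∑ a, ∑ c, f a b c + ∑ c ∈ u, ∑ a, ∑ b, f a b c <
      ∑ a, ∑ b, ∑ c, f a b c) : ∃ a ∉ s, ∃ b ∉ t, ∃ c ∉ u, f a b c ≠ 0 := by
  classical
  by_contra! hzero
  have hle (a : ι) (b : κ) (c : η) : f a b c ≤ (if a ∈ s then f a b c else 0) +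
      (if b ∈ t then f a b c else 0) + if c ∈ u then f a b c else 0 := by
    have := hf a b c
    have := hzero a
    grind
  have hsum := Finset.sum_le_sum fun a (_ : a ∈ univ) => Finset.sum_le_sum fun b (_ : b ∈ univ) =>
    Finset.sum_le_sum fun c (_ : c ∈ univ) => hle a b c
  simp only [Finset.sum_add_distrib] at hsum
  have hs : ∑ a, ∑ b, ∑ c, (if a ∈ s then f a b c else 0) = ∑ a ∈ s, ∑ b, ∑ c, f a b c := by
    rw [← Finset.sum_subset s.subset_univ fun a _ ha => by simp [ha]]
    exact Finset.sum_congr rfl fun a ha => by simp [ha]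
  have ht : ∑ a, ∑ b, ∑ c, (if b ∈ t then f a b c else 0) = ∑ b ∈ t, ∑ a, ∑ c, f a b c := by
    rw [Finset.sum_comm, ← Finset.sum_subset t.subset_univ fun b _ hb => by simp [hb]]
    exact Finset.sum_congr rfl fun b hb => by simp [hb]
  have hu : ∑ a, ∑ b, ∑ c, (if c ∈ u then f a b c else 0) = ∑ c ∈ u, ∑ a, ∑ b, f a b c := by
    simp only [Finset.sum_ite_mem, Finset.univ_inter, Finset.sum_comm (t := u)]
  linarith

lemma exists_isotypicTripleProjector_ne_zero {ρ : Matrix (A × B) (A × B) ℂ} {ρA : Matrix A A ℂ}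
    {ρB : Matrix B B ℂ} (hρ : ρ.PosSemidef) (hρtr : ρ.trace = 1)
    (hρA : ∀ a a', ρA a a' = ∑ b, ρ (a, b) (a', b))
    (hρB : ∀ b b', ρB b b' = ∑ a, ρ (a, b) (a, b')) {s t u : Finset (Nat.Partition k)}
    (hs : ∑ p ∈ s, isotypicWeight ρ p < 1 / 3) (ht : ∑ q ∈ t, isotypicWeight ρA q < 1 / 3)
    (hu : ∑ r ∈ u, isotypicWeight ρB r < 1 / 3) :
    ∃ p ∉ s, ∃ q ∉ t, ∃ r ∉ u, isotypicTripleProjector p q r ≠ 0 := by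
  obtain ⟨p, hp, q, hq, r, hr, hpqr⟩ :=
    exists_ne_zero_of_sum_lt (jointWeight_nonneg hρ) s t u (by
      simp only [sum_sum_jointWeight_fst, sum_sum_jointWeight_snd hρA, sum_sum_jointWeight_trd hρB,
        sum_isotypicWeight hρtr]
      linarith)
  exact ⟨p, hp, q, hq, r, hr, fun hzero => hpqr (by simp [jointWeight, hzero])⟩

end Weights

section RowProducts

lemma prod_le_prod_range_card {R : ℕ → ℝ} (hR : Antitone R) (hR0 : ∀ i, 0 ≤ R i)
    (S : Finset ℕ) : ∏ i ∈ S, R i ≤ ∏ i ∈ range #S, R i := by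
  induction S using Finset.induction_on_max with
  | empty => simp
  | insert a S ha ih =>
    have haS : a ∉ S := fun h => lt_irrefl _ (ha a h)
    have hcard : #S ≤ a := by
      simpa using Finset.card_le_card fun x hx => Finset.mem_range.2 (ha x hx)
    rw [Finset.prod_insert haS, Finset.card_insert_of_notMem haS, Finset.prod_range_succ, mul_comm]
    exact mul_le_mul ih (hR hcard) (hR0 _) (Finset.prod_nonneg fun i _ => hR0 i)

lemma eq_range_card_of_isLowerSet {S : Finset ℕ} (hS : IsLowerSet (S : Set ℕ)) :
    S = range #S := by
  refine Finset.eq_of_subset_of_card_le (fun x hx => ?_) (by simp)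
  have hsub : range (x + 1) ⊆ S := fun y hy => hS (Nat.lt_succ_iff.1 (Finset.mem_range.1 hy)) hx
  simpa [Nat.succ_le_iff] using Finset.card_le_card hsub

variable {k : ℕ} {lam : ℕ → ℕ} {t : Fin k → ℕ × ℕ} {R : ℕ → ℝ}

namespace IsTableau

lemma image_row_column (ht : IsTableau k lam t) (c : ℕ) :
    image (fun j => (t j).1) {j | (t j).2 = c} = range #{j | (t j).2 = c} := by
  have hinj : Set.InjOn (fun j => (t j).1) ({j | (t j).2 = c} : Finset (Fin k)) := by
    intro i hi j hj hij
    simp only [Finset.coe_filter, Finset.mem_univ, true_and, Set.mem_ofPred_eq] at hi hj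
    exact ht.injective (Prod.ext hij (hi.trans hj.symm))
  rw [← Finset.card_image_of_injOn hinj]
  refine eq_range_card_of_isLowerSet fun r r' hr' hr => ?_
  simp only [Finset.coe_image, Finset.coe_filter, Finset.mem_univ, true_and, Set.mem_image,
    Set.mem_ofPred_eq] at hr ⊢
  obtain ⟨j, rfl, rfl⟩ := hr
  obtain ⟨i, hi⟩ := ht.exists_eq ((ht.col_lt j).trans_le (ht.isPartitionOf.1 hr'))
  exact ⟨i, by simp [hi]⟩

lemma prod_le_prod_row (ht : IsTableau k lam t) (hR : Antitone R) (hR0 : ∀ i, 0 ≤ R i)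
    {v : Fin k → ℕ} (hv : Function.Injective fun j => (v j, (t j).2)) :
    ∏ j, R (v j) ≤ ∏ j, R (t j).1 := by
  have hinj {f : Fin k → ℕ} (hf : Function.Injective fun j => (f j, (t j).2)) (c : ℕ) :
      Set.InjOn f ({j | (t j).2 = c} : Finset (Fin k)) := by
    intro i hi j hj hij
    simp only [Finset.coe_filter, Finset.mem_univ, true_and, Set.mem_ofPred_eq] at hi hj
    exact hf (Prod.ext hij (hi.trans hj.symm))
  have hcols (j : Fin k) (_ : j ∈ univ) : (t j).2 ∈ image (fun j => (t j).2) univ := by simp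
  rw [← Finset.prod_fiberwise_of_maps_to hcols, ← Finset.prod_fiberwise_of_maps_to hcols]
  refine Finset.prod_le_prod (fun c _ => Finset.prod_nonneg fun j _ => hR0 _) fun c _ => ?_
  calc ∏ j with (t j).2 = c, R (v j) = ∏ i ∈ image v {j | (t j).2 = c}, R i :=
        (Finset.prod_image (hinj hv c)).symm
    _ ≤ ∏ i ∈ range #{j | (t j).2 = c}, R i :=
        (prod_le_prod_range_card hR hR0 _).trans_eq (by rw [Finset.card_image_of_injOn (hinj hv c)])
    _ = ∏ j with (t j).2 = c, R (t j).1 := by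
        rw [← ht.image_row_column c, Finset.prod_image (hinj ht.injective c)]

end IsTableau

section Translation

variable {G X : Type*} [Group G] [Fintype X] [DecidableEq X] (act : G →* Equiv.Perm X)
  (x : MonoidAlgebra ℂ G) (g : G) (u v : X)

lemma permRep_single_mul :
    permRep act (MonoidAlgebra.single g 1 * x) u v = permRep act x ((act g).symm u) v := by
  simp [Matrix.mul_apply, permRep_single, ← Equiv.eq_symm_apply]

lemma permRep_mul_single :
    permRep act (x * MonoidAlgebra.single g 1) u v = permRep act x u (act g v) := by
  simp [Matrix.mul_apply, permRep_single]

end Translation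

variable {α : Type*} [Fintype α] [DecidableEq α]

lemma permRep_colSum_apply_eq_zero {w : Fin k → α}
    (hw : ¬ Function.Injective fun j => (w j, (t j).2)) (u : Fin k → α) :
    permRep (wordAction (Fin k) α) (colSum t) w u = 0 := by
  simp only [Function.not_injective_iff, Prod.mk.injEq] at hw
  obtain ⟨i, j, ⟨hwij, hcol⟩, hij⟩ := hw
  have hsymm : (wordAction (Fin k) α (Equiv.swap i j)).symm w = w :=
    funext (swap_mem_labelStabilizer hwij)
  have hneg := congr_fun₂ (congrArg (permRep (wordAction (Fin k) α)) (single_mul_signedSum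
    (χ := Equiv.Perm.sign) (swap_mem_labelStabilizer (f := fun j => (t j).2) hcol))) w u
  rw [permRep_single_mul, hsymm, Equiv.Perm.sign_swap hij, ← colSum] at hneg
  exact self_eq_neg.1 (by simpa using hneg)

lemma IsTableau.prod_le_prod_row_of_permRep_ne_zero {d : ℕ} (ht : IsTableau k lam t)
    (hR : Antitone R) (hR0 : ∀ i, 0 ≤ R i) {w : Fin k → Fin d} (hw : permRep
      (wordAction (Fin k) (Fin d)) (centralProjector (youngIdempotent k t)) w w ≠ 0) :
    ∏ j, R (w j) ≤ ∏ j, R (t j).1 := by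
  contrapose! hw with hlt
  rw [centralProjector, map_smul, map_sum, Matrix.smul_apply, Matrix.sum_apply,
    Finset.sum_eq_zero, smul_zero]
  intro σ _
  have hσ : ¬ Function.Injective
      fun j => ((wordAction (Fin k) (Fin d) σ).symm w j, (t j).2) := fun hinj => by
    refine hlt.not_ge ((Equiv.prod_comp σ fun j => R (w j)).symm.trans_le ?_)
    refine ht.prod_le_prod_row hR hR0 (v := fun j => w (σ j)) fun i j hij => hinj ?_
    simpa [wordAction_symm_apply, Fin.val_inj] using hij
  have hfactor : ∃ y, youngIdempotent k t * MonoidAlgebra.single σ⁻¹ 1 = colSum t * y :=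
    ⟨((youngSym k t * youngSym k t).coeff 1)⁻¹ • (rowSum t * MonoidAlgebra.single σ⁻¹ 1), by
      rw [mul_smul_comm, ← mul_assoc, ← youngSym_eq_colSum_mul_rowSum, youngIdempotent,
        smul_mul_assoc]⟩
  obtain ⟨y, hy⟩ := hfactor
  rw [mul_assoc, hy, permRep_single_mul, map_mul, Matrix.mul_apply]
  exact Finset.sum_eq_zero fun u _ => by rw [permRep_colSum_apply_eq_zero hσ, zero_mul]

lemma re_trace_mul_diagonal_le {X : Type*} [Fintype X] [DecidableEq X] {P : Matrix X X ℂ}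
    (hP : IsStarProjection P) {f : X → ℝ} {c : ℝ} (hf : ∀ x, P x x ≠ 0 → f x ≤ c) :
    (P * diagonal fun x => (f x : ℂ)).trace.re ≤ c * P.trace.re := by
  have hpos : P.PosSemidef := by
    rw [← hP.isIdempotentElem.eq]
    nth_rw 1 [← hP.isSelfAdjoint.star_eq]
    exact posSemidef_conjTranspose_mul_self P
  simp only [Matrix.trace, Complex.re_sum, Finset.mul_sum, diag_apply, mul_diagonal,
    Complex.re_mul_ofReal]
  refine Finset.sum_le_sum fun x _ => ?_
  by_cases hx : P x x = 0
  · simp [hx]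
  · rw [mul_comm]
    exact mul_le_mul_of_nonneg_right (hf x hx) (Complex.nonneg_iff.1 hpos.diag_nonneg).1

lemma isotypicWeight_diagonal_le {d : ℕ} (hR : Antitone R) (hR0 : ∀ i, 0 ≤ R i)
    (p : Nat.Partition k) :
    isotypicWeight (diagonal fun i : Fin d => (R i : ℂ)) p ≤ (∏ j, R (tableau p j).1) *
      ((regRep _ (youngIdempotent k (tableau p))).rank *
        (permRep (wordAction (Fin k) (Fin d)) (youngIdempotent k (tableau p))).rank) := by
  have hP := (isSelfAdjointElem_isotypicProjector p).isStarProjection_permRep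
    (isIdempotentElem_isotypicProjector p) (wordAction (Fin k) (Fin d))
  have hle := re_trace_mul_diagonal_le hP (f := fun w => ∏ j, R (w j)) fun w =>
    (isTableau_tableau p).prod_le_prod_row_of_permRep_ne_zero hR hR0
  simp only [Complex.ofReal_prod, isotypicProjector,
    (isMinimalIdempotent_youngIdempotent_tableau p).trace_permRep_centralProjector] at hle
  rw [isotypicWeight, tensorPower_diagonal]
  exact_mod_cast hle

end RowProducts

section Ranks

/-- The number of occurrences of each letter in the word `w`. -/
def letterCount {J α : Type*} [Fintype J] [DecidableEq α] (w : J → α) (a : α) :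
    Fin (Fintype.card J + 1) :=
  ⟨#{j | w j = a}, Nat.lt_succ_of_le (Finset.card_le_univ _)⟩

variable {J α β : Type*} [Fintype J] [DecidableEq α] [DecidableEq β]

lemma exists_comp_eq_of_letterCount_eq {v w : J → α} (h : letterCount v = letterCount w) :
    ∃ π : Equiv.Perm J, v ∘ π = w := by
  have hfiber (a : α) : Nonempty ({j // w j = a} ≃ {j // v j = a}) := by
    rw [← Fintype.card_eq, Fintype.card_subtype, Fintype.card_subtype]
    exact (congrArg Fin.val (congrFun h a)).symm
  exact ⟨Equiv.ofFiberEquiv fun a => (hfiber a).some, funext (Equiv.ofFiberEquiv_map _)⟩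

lemma rank_permRep_le_card {G X Y : Type*} [Group G] [Fintype X] [DecidableEq X] [Fintype Y]
    {act : G →* Equiv.Perm X} {x : MonoidAlgebra ℂ G} {H : Subgroup G}
    (hx : ∀ h ∈ H, x * MonoidAlgebra.single h 1 = x) (f : X → Y)
    (hf : ∀ v w, f v = f w → ∃ h ∈ H, act h v = w) : (permRep act x).rank ≤ Fintype.card Y := by
  refine rank_le_card_of_factorsThrough (f := f) fun u v w hvw => ?_
  obtain ⟨h, hh, rfl⟩ := hf v w hvw
  rw [← permRep_mul_single, hx h hh]

variable [DecidableEq J] {f : J → α} {x : MonoidAlgebra ℂ (Equiv.Perm J)}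

omit [DecidableEq α] in
lemma rank_permRep_wordAction_le [Fintype α] [Fintype β]
    (hx : ∀ h ∈ labelStabilizer f, x * MonoidAlgebra.single h 1 = x) :
    (permRep (wordAction J β) x).rank ≤
      (Fintype.card J + 1) ^ (Fintype.card α * Fintype.card β) := by
  classical
  refine (rank_permRep_le_card hx (fun w => letterCount fun j => (f j, w j)) ?_).trans_eq (by simp)
  intro v w hvw
  obtain ⟨π, hπ⟩ := exists_comp_eq_of_letterCount_eq hvw
  refine ⟨π⁻¹, inv_mem fun j => congrArg Prod.fst (congrFun hπ j), funext fun j => ?_⟩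
  rw [wordAction_apply, inv_inv]
  exact congrArg Prod.snd (congrFun hπ j)

/-- The rearrangements of the word `f`. -/
def rearrangements (f : J → α) : Finset (J → α) :=
  univ.image fun π : Equiv.Perm J => f ∘ π

lemma rank_regRep_le_card_rearrangements
    (hx : ∀ h ∈ labelStabilizer f, x * MonoidAlgebra.single h 1 = x) :
    (regRep _ x).rank ≤ #(rearrangements f) := by
  rw [← Fintype.card_coe]
  refine rank_permRep_le_card hx (fun π => (⟨f ∘ π, Finset.mem_image_of_mem _ (Finset.mem_univ π)⟩ :
    rearrangements f)) fun π τ hπτ => ⟨τ * π⁻¹, fun j => ?_, by simp⟩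
  simpa using (congrFun (Subtype.ext_iff.1 hπτ) (π⁻¹ j)).symm

lemma card_rearrangements_mul_prod_le [Fintype α] {q : α → ℝ} (hq : ∀ a, 0 ≤ q a) (f : J → α) :
    #(rearrangements f) * ∏ j, q (f j) ≤ (∑ a, q a) ^ Fintype.card J := by
  have hconst (w) (hw : w ∈ rearrangements f) : ∏ j, q (w j) = ∏ j, q (f j) := by
    obtain ⟨π, -, rfl⟩ := Finset.mem_image.1 hw
    exact Equiv.prod_comp π fun j => q (f j)
  calc #(rearrangements f) * ∏ j, q (f j) = ∑ w ∈ rearrangements f, ∏ j, q (w j) := by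
        rw [Finset.sum_congr rfl hconst, Finset.sum_const, nsmul_eq_mul]
    _ ≤ ∑ w : J → α, ∏ j, q (w j) :=
        Finset.sum_le_univ_sum_of_nonneg fun w => Finset.prod_nonneg fun j _ => hq _
    _ = (∑ a, q a) ^ Fintype.card J := by
        rw [← Finset.card_univ, ← Finset.prod_const, Finset.prod_univ_sum, Fintype.piFinset_univ]

end Ranks

section Inequalities

lemma prod_le_mean_pow {J : Type*} [Fintype J] {x : J → ℝ} (hx : ∀ j, 0 ≤ x j) :
    ∏ j, x j ≤ ((∑ j, x j) / Fintype.card J) ^ Fintype.card J := by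
  rcases isEmpty_or_nonempty J with hJ | hJ
  · simp
  have hmean := Real.geom_mean_le_arith_mean univ (fun _ => 1) x (by simp)
    (by simpa using Fintype.card_pos) (fun j _ => hx j)
  simp only [Real.rpow_one, one_mul, Finset.sum_const, Finset.card_univ, nsmul_eq_mul,
    mul_one] at hmean
  have hprod : 0 ≤ ∏ j, x j := Finset.prod_nonneg fun j _ => hx j
  rw [← Real.rpow_inv_natCast_pow hprod (Fintype.card_ne_zero (α := J))]
  exact pow_le_pow_left₀ (Real.rpow_nonneg hprod _) hmean _

lemma mul_sqrt_div (a : ℝ) {b : ℝ} (hb : 0 ≤ b) : b * √(a / b) = √(a * b) := by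
  rcases hb.eq_or_lt with rfl | hb
  · simp
  · rw [show a * b = b ^ 2 * (a / b) by field_simp, Real.sqrt_mul (sq_nonneg b), Real.sqrt_sq hb.le]

lemma mul_prod_le_sq_prod_sqrt_div {J : Type*} [Fintype J] {r q : J → ℝ} {c : ℝ}
    (hr : ∀ j, 0 ≤ r j) (hq : ∀ j, 0 < q j) (hc : c * ∏ j, q j ≤ 1) :
    c * ∏ j, r j ≤ (∏ j, √(r j / q j)) ^ 2 := by
  have hsq : (∏ j, √(r j / q j)) ^ 2 = ∏ j, r j / q j := by
    rw [← Finset.prod_pow]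
    exact Finset.prod_congr rfl fun j _ => Real.sq_sqrt (div_nonneg (hr j) (hq j).le)
  rw [hsq, Finset.prod_div_distrib, le_div_iff₀ (Finset.prod_pos fun j _ => hq j),
    mul_right_comm]
  exact mul_le_of_le_one_left (Finset.prod_nonneg fun j _ => hr j) hc

lemma sum_sqrt_mul_le {ι : Type*} [Fintype ι] {R Q : ι → ℝ} (hR0 : ∀ i, 0 ≤ R i)
    (hQ0 : ∀ i, 0 ≤ Q i) (hR1 : ∑ i, R i = 1) (hQ1 : ∑ i, Q i = 1) (i : ι) :
    ∑ i, √(R i * Q i) ≤ 1 - |Q i - R i| ^ 2 / 8 := by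
  have hsqrt (l : ι) : √(R l * Q l) = (R l + Q l) / 2 - (√(R l) - √(Q l)) ^ 2 / 2 := by
    rw [Real.sqrt_mul (hR0 l)]
    linear_combination (1 / 2) * Real.sq_sqrt (hR0 l) + (1 / 2) * Real.sq_sqrt (hQ0 l)
  have hsum : ∑ l, √(R l * Q l) = 1 - (∑ l, (√(R l) - √(Q l)) ^ 2) / 2 := by
    simp only [hsqrt, Finset.sum_sub_distrib, ← Finset.sum_div, Finset.sum_add_distrib, hR1, hQ1]
    norm_num
  have hterm : (√(R i) - √(Q i)) ^ 2 ≤ ∑ l, (√(R l) - √(Q l)) ^ 2 :=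
    Finset.single_le_sum (f := fun l => (√(R l) - √(Q l)) ^ 2) (fun _ _ => sq_nonneg _)
      (Finset.mem_univ i)
  have hR : √(R i) ≤ 1 := Real.sqrt_le_one.2
    (hR1 ▸ Finset.single_le_sum (fun l _ => hR0 l) (Finset.mem_univ i))
  have hQ : √(Q i) ≤ 1 := Real.sqrt_le_one.2
    (hQ1 ▸ Finset.single_le_sum (fun l _ => hQ0 l) (Finset.mem_univ i))
  have hdiff : |Q i - R i| ^ 2 ≤ 4 * (√(R i) - √(Q i)) ^ 2 :=
    calc |Q i - R i| ^ 2 = (√(R i) + √(Q i)) ^ 2 * (√(R i) - √(Q i)) ^ 2 := by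
          rw [sq_abs, ← mul_pow, ← _root_.sq_sub_sq, Real.sq_sqrt (hR0 i), Real.sq_sqrt (hQ0 i),
            sub_sq_comm]
      _ ≤ 2 ^ 2 * (√(R i) - √(Q i)) ^ 2 := by gcongr; linarith
      _ = 4 * (√(R i) - √(Q i)) ^ 2 := by norm_num
  linarith

lemma tendsto_natCast_add_one_pow_mul_pow (N : ℕ) {c : ℝ} (hc0 : 0 ≤ c) (hc1 : c < 1) :
    Tendsto (fun k : ℕ => ((k : ℝ) + 1) ^ N * c ^ k) atTop (nhds 0) := by
  simp only [add_pow, one_pow, mul_one, Finset.sum_mul]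
  rw [← Finset.sum_const_zero (s := range (N + 1))]
  refine tendsto_finsetSum _ fun i _ => ?_
  simpa [mul_right_comm] using (tendsto_pow_const_mul_const_pow_of_abs_lt_one i
    (by rwa [abs_of_nonneg hc0])).mul_const (N.choose i : ℝ)

end Inequalities

section Concentration

/-- `R` is a weakly decreasing probability distribution on `{0, …, d - 1}`, continued by zero:
the spectrum of a density operator, or a limit of normalized partitions. -/
structure IsOrderedDistribution (d : ℕ) (R : ℕ → ℝ) : Prop where
  antitone : Antitone R
  eq_zero : ∀ i, d ≤ i → R i = 0
  sum_eq_one : ∑ i : Fin d, R i = 1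

lemma IsOrderedDistribution.nonneg {d : ℕ} {R : ℕ → ℝ} (hR : IsOrderedDistribution d R) (i : ℕ) :
    0 ≤ R i :=
  (hR.eq_zero _ (le_max_right i d)).symm.trans_le (hR.antitone (le_max_left i d))

variable {k d : ℕ} {lam : ℕ → ℕ} {t : Fin k → ℕ × ℕ} {R : ℕ → ℝ}

lemma isOrderedDistribution_div (hlam : IsPartitionOf k lam) (hd : ∀ i, d ≤ i → lam i = 0)
    (hk : 0 < k) : IsOrderedDistribution d fun i => (lam i : ℝ) / k where
  antitone i j hij :=
    div_le_div_of_nonneg_right (Nat.cast_le.2 (hlam.1 hij)) (Nat.cast_nonneg k)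
  eq_zero i hi := by simp [hd i hi]
  sum_eq_one := by
    have hsum : ∑ i ∈ range d, lam i = k := by
      rw [← hlam.2.2]
      rcases le_total d k with hdk | hkd
      · exact Finset.sum_subset (by simpa using hdk) fun i _ hi => hd i (by simpa using hi)
      · exact (Finset.sum_subset (by simpa using hkd) fun i _ hi =>
          hlam.2.1 i (by simpa using hi)).symm
    rw [Fin.sum_univ_eq_sum_range fun i => (lam i : ℝ) / k, ← Finset.sum_div, ← Nat.cast_sum, hsum,
      div_self (by positivity)]

lemma youngIdempotent_mul_single {h : Equiv.Perm (Fin k)}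
    (hh : h ∈ labelStabilizer fun j => (t j).1) :
    youngIdempotent k t * MonoidAlgebra.single h 1 = youngIdempotent k t := by
  have hrow : rowSum t * MonoidAlgebra.single h 1 = rowSum t := by
    simpa [rowSum] using signedSum_mul_single (χ := 1) hh
  have hsym : youngSym k t * MonoidAlgebra.single h 1 = youngSym k t := by
    rw [youngSym_eq_colSum_mul_rowSum, mul_assoc, hrow]
  rw [youngIdempotent, smul_mul_assoc, hsym]

namespace IsTableau

lemma row_lt_of_eq_zero (ht : IsTableau k lam t) (hd : ∀ i, d ≤ i → lam i = 0) (j : Fin k) :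
    (t j).1 < d :=
  lt_of_not_ge fun h => absurd (ht.col_lt j) (by simp [hd _ h])

lemma rank_permRep_youngIdempotent_le (ht : IsTableau k lam t) (hd : ∀ i, d ≤ i → lam i = 0) :
    (permRep (wordAction (Fin k) (Fin d)) (youngIdempotent k t)).rank ≤ (k + 1) ^ (d * d) := by
  have hrank := rank_permRep_wordAction_le (β := Fin d)
    (f := fun j => (⟨(t j).1, ht.row_lt_of_eq_zero hd j⟩ : Fin d)) fun h hh =>
      youngIdempotent_mul_single fun j => congrArg Fin.val (hh j)
  simpa using hrank

lemma rank_regRep_youngIdempotent_mul_prod_le (ht : IsTableau k lam t)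
    (hd : ∀ i, d ≤ i → lam i = 0) {q : ℕ → ℝ} (hq : ∀ i, 0 ≤ q i) :
    (regRep _ (youngIdempotent k t)).rank * ∏ j, q (t j).1 ≤ (∑ i : Fin d, q i) ^ k := by
  set f : Fin k → Fin d := fun j => ⟨(t j).1, ht.row_lt_of_eq_zero hd j⟩
  have hrank : (regRep _ (youngIdempotent k t)).rank ≤ #(rearrangements f) :=
    rank_regRep_le_card_rearrangements fun h hh =>
      youngIdempotent_mul_single fun j => congrArg Fin.val (hh j)
  calc (regRep _ (youngIdempotent k t)).rank * ∏ j, q (t j).1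
      ≤ #(rearrangements f) * ∏ j, q (f j) := by
        have := Finset.prod_nonneg fun j (_ : j ∈ univ) => hq (f j)
        gcongr
    _ ≤ (∑ i : Fin d, q i) ^ k := by
        simpa using card_rearrangements_mul_prod_le (q := fun i : Fin d => q i) (fun i => hq i) f

lemma sum_row (ht : IsTableau k lam t) (hd : ∀ i, d ≤ i → lam i = 0) (y : ℕ → ℝ) :
    ∑ j, y (t j).1 = ∑ i : Fin d, lam i * y i := by
  rw [Fin.sum_univ_eq_sum_range fun i => lam i * y i, ← Finset.sum_fiberwise_of_maps_to
    fun j _ => Finset.mem_range.2 (ht.row_lt_of_eq_zero hd j)]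
  refine Finset.sum_congr rfl fun i _ => ?_
  rw [← ht.card_row i, ← nsmul_eq_mul, ← Finset.sum_const]
  exact Finset.sum_congr rfl fun j hj => by rw [(Finset.mem_filter.1 hj).2]

lemma rank_regRep_youngIdempotent_mul_prod_row_le (ht : IsTableau k lam t) (hk : 0 < k)
    (hd : ∀ i, d ≤ i → lam i = 0) (hR0 : ∀ i, 0 ≤ R i) :
    (regRep _ (youngIdempotent k t)).rank * ∏ j, R (t j).1 ≤
      (∑ i : Fin d, √(R i * (lam i / k))) ^ (2 * k) := by
  set q : ℕ → ℝ := fun i => lam i / k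
  have hq0 (i : ℕ) : 0 ≤ q i := by positivity
  have hqt (j : Fin k) : 0 < q (t j).1 := by
    have := (Nat.zero_le _).trans_lt (ht.col_lt j)
    positivity
  have hrank := ht.rank_regRep_youngIdempotent_mul_prod_le hd hq0
  rw [(isOrderedDistribution_div ht.isPartitionOf hd hk).sum_eq_one, one_pow] at hrank
  have hmean : (∑ j, √(R (t j).1 / q (t j).1)) / k = ∑ i : Fin d, √(R i * q i) := by
    rw [ht.sum_row hd fun i => √(R i / q i), Finset.sum_div]
    refine Finset.sum_congr rfl fun i _ => ?_
    rw [← mul_sqrt_div _ (hq0 i), mul_div_right_comm]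
  calc (regRep _ (youngIdempotent k t)).rank * ∏ j, R (t j).1
      ≤ (∏ j, √(R (t j).1 / q (t j).1)) ^ 2 :=
        mul_prod_le_sq_prod_sqrt_div (fun j => hR0 _) hqt hrank
    _ ≤ ((∑ i : Fin d, √(R i * q i)) ^ k) ^ 2 := by
        refine pow_le_pow_left₀ (Finset.prod_nonneg fun j _ => Real.sqrt_nonneg _) ?_ 2
        simpa [← hmean] using prod_le_mean_pow fun j => Real.sqrt_nonneg (R (t j).1 / q (t j).1)
    _ = (∑ i : Fin d, √(R i * q i)) ^ (2 * k) := by rw [← pow_mul, mul_comm]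

end IsTableau

variable {ε : ℝ}

lemma isotypicWeight_diagonal_le_of_le_abs (hR : IsOrderedDistribution d R) (hk : 0 < k)
    {p : Nat.Partition k} (hd : ∀ i, d ≤ i → rowLength p i = 0) (hε : 0 ≤ ε) {i : Fin d}
    (hi : ε ≤ |(rowLength p i : ℝ) / k - R i|) :
    isotypicWeight (diagonal fun i : Fin d => (R i : ℂ)) p ≤
      ((k : ℝ) + 1) ^ (d * d) * (1 - ε ^ 2 / 8) ^ (2 * k) := by
  have ht := isTableau_tableau p
  have hq := isOrderedDistribution_div ht.isPartitionOf hd hk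
  have hfidelity : ∑ i : Fin d, √(R i * (rowLength p i / k)) ≤ 1 - ε ^ 2 / 8 := by
    refine (sum_sqrt_mul_le (fun i => hR.nonneg _) (fun i => hq.nonneg _) hR.sum_eq_one
      hq.sum_eq_one i).trans ?_
    gcongr
  have hrank : ((permRep (wordAction (Fin k) (Fin d)) (youngIdempotent k (tableau p))).rank : ℝ) ≤
      ((k : ℝ) + 1) ^ (d * d) := by
    exact_mod_cast ht.rank_permRep_youngIdempotent_le hd
  refine (isotypicWeight_diagonal_le hR.antitone hR.nonneg p).trans ?_
  rw [mul_left_comm, ← mul_assoc, mul_comm]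
  refine mul_le_mul hrank ?_ (mul_nonneg (Nat.cast_nonneg _)
    (Finset.prod_nonneg fun j _ => hR.nonneg _)) (by positivity)
  exact (ht.rank_regRep_youngIdempotent_mul_prod_row_le hk hd hR.nonneg).trans
    (pow_le_pow_left₀ (Finset.sum_nonneg fun i _ => Real.sqrt_nonneg _) hfidelity _)

lemma isotypicWeight_diagonal_nonpos (hR : IsOrderedDistribution d R) {p : Nat.Partition k} {i : ℕ}
    (hi : d ≤ i) (hpi : rowLength p i ≠ 0) :
    isotypicWeight (diagonal fun i : Fin d => (R i : ℂ)) p ≤ 0 := by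
  obtain ⟨j, hj⟩ := (isTableau_tableau p).exists_eq (Nat.pos_of_ne_zero hpi)
  refine (isotypicWeight_diagonal_le hR.antitone hR.nonneg p).trans_eq ?_
  rw [Finset.prod_eq_zero (Finset.mem_univ j) (by rw [hj, hR.eq_zero i hi]), zero_mul]

/-- The normalized rows of `p` approximate the distribution `R` on `{0, …, d - 1}` up to `ε`. -/
def Approximates (d : ℕ) (R : ℕ → ℝ) (ε : ℝ) (p : Nat.Partition k) : Prop :=
  (∀ i, d ≤ i → rowLength p i = 0) ∧ ∀ i : Fin d, |(rowLength p i : ℝ) / k - R i| < ε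

open Classical in
lemma card_partition_le (k d : ℕ) :
    #{p : Nat.Partition k | ∀ i, d ≤ i → rowLength p i = 0} ≤ (k + 1) ^ d := by
  have hcard : Fintype.card (Fin d → Fin (k + 1)) = (k + 1) ^ d := by simp
  rw [← hcard, ← Finset.card_univ]
  refine Finset.card_le_card_of_injOn (fun p i =>
    ⟨rowLength p i, Nat.lt_succ_of_le ((isPartitionOf_rowLength p).apply_le i)⟩)
    (fun _ _ => Finset.mem_coe.2 (Finset.mem_univ _)) fun p hp q hq hpq => ?_
  simp only [Finset.coe_filter, Finset.mem_univ, true_and, Set.mem_ofPred_eq] at hp hq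
  refine rowLength_injective (funext fun i => ?_)
  rcases lt_or_ge i d with hi | hi
  · exact congrArg Fin.val (congrFun hpq ⟨i, hi⟩)
  · rw [hp i hi, hq i hi]

open Classical in
lemma sum_isotypicWeight_diagonal_not_approximates_le (hR : IsOrderedDistribution d R) (hk : 0 < k)
    (hε : 0 ≤ ε) :
    ∑ p : Nat.Partition k with ¬ Approximates d R ε p,
      isotypicWeight (diagonal fun i : Fin d => (R i : ℂ)) p ≤
        ((k : ℝ) + 1) ^ (d + d * d) * ((1 - ε ^ 2 / 8) ^ 2) ^ k := by
  set b : ℝ := ((k : ℝ) + 1) ^ (d * d) * ((1 - ε ^ 2 / 8) ^ 2) ^ k with hb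
  have hb0 : 0 ≤ b := by positivity
  have hterm (p) (hp : p ∈ ({p | ¬ Approximates d R ε p} : Finset (Nat.Partition k))) :
      isotypicWeight (diagonal fun i : Fin d => (R i : ℂ)) p ≤
        if ∀ i, d ≤ i → rowLength p i = 0 then b else 0 := by
    simp only [Finset.mem_filter, Finset.mem_univ, true_and, Approximates, not_and] at hp
    split_ifs with hd
    · obtain ⟨i, hi⟩ := not_forall.1 (hp hd)
      rw [hb, ← pow_mul]
      exact isotypicWeight_diagonal_le_of_le_abs hR hk hd hε (not_lt.1 hi)
    · push Not at hd
      obtain ⟨i, hi, hpi⟩ := hd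
      exact isotypicWeight_diagonal_nonpos hR hi hpi
  calc _ ≤ ∑ p : Nat.Partition k with ¬ Approximates d R ε p,
          if ∀ i, d ≤ i → rowLength p i = 0 then b else 0 := Finset.sum_le_sum hterm
    _ ≤ ∑ p : Nat.Partition k, if ∀ i, d ≤ i → rowLength p i = 0 then b else 0 :=
        Finset.sum_le_univ_sum_of_nonneg fun p => by split_ifs <;> simp [hb0]
    _ = #{p : Nat.Partition k | ∀ i, d ≤ i → rowLength p i = 0} * b := by
        rw [← Finset.sum_filter, Finset.sum_const, nsmul_eq_mul]
    _ ≤ ((k : ℝ) + 1) ^ d * b := by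
        gcongr
        exact_mod_cast card_partition_le k d
    _ = ((k : ℝ) + 1) ^ (d + d * d) * ((1 - ε ^ 2 / 8) ^ 2) ^ k := by rw [hb, pow_add, mul_assoc]

end Concentration

section PartialTraces

variable {A B : Type*} [Fintype A] [Fintype B] {ρ : Matrix (A × B) (A × B) ℂ}

omit [Fintype A] in
lemma posSemidef_of_eq_sum_snd (hρ : ρ.PosSemidef) {ρA : Matrix A A ℂ}
    (hρA : ∀ a a', ρA a a' = ∑ b, ρ (a, b) (a', b)) : ρA.PosSemidef := by
  have hsum : ρA = ∑ b, ρ.submatrix (fun a => (a, b)) (fun a => (a, b)) := by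
    ext a a'
    simp [hρA, Matrix.sum_apply]
  exact hsum ▸ Matrix.posSemidef_sum _ fun b _ => hρ.submatrix _

lemma trace_eq_of_eq_sum_snd {ρA : Matrix A A ℂ}
    (hρA : ∀ a a', ρA a a' = ∑ b, ρ (a, b) (a', b)) : ρA.trace = ρ.trace := by
  simp [Matrix.trace, hρA, Fintype.sum_prod_type]

omit [Fintype B] in
lemma posSemidef_of_eq_sum_fst (hρ : ρ.PosSemidef) {ρB : Matrix B B ℂ}
    (hρB : ∀ b b', ρB b b' = ∑ a, ρ (a, b) (a, b')) : ρB.PosSemidef :=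
  posSemidef_of_eq_sum_snd (hρ.submatrix Prod.swap) hρB

lemma trace_eq_of_eq_sum_fst {ρB : Matrix B B ℂ}
    (hρB : ∀ b b', ρB b b' = ∑ a, ρ (a, b) (a, b')) : ρB.trace = ρ.trace := by
  simp [Matrix.trace, hρB, Fintype.sum_prod_type_right]

end PartialTraces

section Spectrum

variable {d : ℕ} {s : Fin d → ℝ}

lemma isOrderedDistribution_extend (hanti : Antitone s) (hnonneg : ∀ i, 0 ≤ s i)
    (hsum : ∑ i, s i = 1) : IsOrderedDistribution d (Function.extend Fin.val s 0) where
  antitone i j hij := by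
    have hlt {l : ℕ} (hl : l < d) : Function.extend Fin.val s 0 l = s ⟨l, hl⟩ :=
      Fin.val_injective.extend_apply s 0 ⟨l, hl⟩
    have hge {l : ℕ} (hl : d ≤ l) : Function.extend Fin.val s 0 l = 0 :=
      Function.extend_apply' _ _ _ fun ⟨i, hi⟩ => (hi ▸ i.isLt).not_ge hl
    rcases lt_or_ge j d with hj | hj
    · rw [hlt hj, hlt (hij.trans_lt hj)]
      exact hanti hij
    · rw [hge hj]
      rcases lt_or_ge i d with hi | hi
      · exact (hnonneg _).trans_eq (hlt hi).symm
      · exact (hge hi).ge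
  eq_zero i hi := Function.extend_apply' _ _ _ fun ⟨j, hj⟩ => (hj ▸ j.isLt).not_ge hi
  sum_eq_one := by simpa only [Fin.val_injective.extend_apply] using hsum

lemma isOrderedDistribution_extend_eigenvalues {α : Type*} [Fintype α] [DecidableEq α]
    {M : Matrix α α ℂ} (hM : M.PosSemidef) (htr : M.trace = 1) {e : Fin d ≃ α}
    (hs : ∀ i, s i = hM.isHermitian.eigenvalues (e i)) (hanti : Antitone s) :
    IsOrderedDistribution d (Function.extend Fin.val s 0) := by
  refine isOrderedDistribution_extend hanti (fun i => hs i ▸ hM.eigenvalues_nonneg _) ?_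
  have hsum := congrArg Complex.re (hM.isHermitian.trace_eq_sum_eigenvalues.symm.trans htr)
  simpa [hs, Equiv.sum_comp e hM.isHermitian.eigenvalues] using hsum

open Classical in
lemma eventually_sum_isotypicWeight_not_approximates_lt {α : Type*} [Fintype α] [DecidableEq α]
    {M : Matrix α α ℂ} (hM : M.PosSemidef) (htr : M.trace = 1) {e : Fin d ≃ α}
    (hs : ∀ i, s i = hM.isHermitian.eigenvalues (e i)) (hanti : Antitone s) {ε : ℝ} (hε0 : 0 < ε)
    (hε1 : ε ≤ 1) : ∀ᶠ k : ℕ in atTop,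
      ∑ p : Nat.Partition k with ¬ Approximates d (Function.extend Fin.val s 0) ε p,
        isotypicWeight M p < 1 / 3 := by
  have hR := isOrderedDistribution_extend_eigenvalues hM htr hs hanti
  have hweight {k : ℕ} (p : Nat.Partition k) : isotypicWeight M p =
      isotypicWeight (diagonal fun i : Fin d => ((Function.extend Fin.val s 0 i : ℝ) : ℂ)) p := by
    simp only [isotypicWeight, Fin.val_injective.extend_apply, hs,
      trace_permRep_mul_tensorPower_eq_diagonal _ hM.isHermitian e]
  have hrate : (1 - ε ^ 2 / 8) ^ 2 < 1 := by
    have : 0 < ε ^ 2 := by positivity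
    have : ε ^ 2 ≤ 1 := pow_le_one₀ hε0.le hε1
    exact pow_lt_one₀ (by linarith) (by linarith) two_ne_zero
  have hlim := tendsto_natCast_add_one_pow_mul_pow (d + d * d) (sq_nonneg (1 - ε ^ 2 / 8)) hrate
  filter_upwards [hlim.eventually_lt_const (by norm_num : (0 : ℝ) < 1 / 3),
    eventually_gt_atTop 0] with k hlt hk
  simp only [hweight]
  exact (sum_isotypicWeight_diagonal_not_approximates_le hR hk hε0.le).trans_lt hlt

lemma tendsto_rowLength_div {kseq : ℕ → ℕ} {p : (j : ℕ) → Nat.Partition (kseq j)}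
    (hp : ∀ j : ℕ, Approximates d (Function.extend Fin.val s 0) (1 / ((j : ℝ) + 1)) (p j))
    (i : Fin d) : Tendsto (fun j => (rowLength (p j) i : ℝ) / kseq j) atTop (nhds (s i)) := by
  rw [tendsto_iff_dist_tendsto_zero]
  refine squeeze_zero (fun _ => dist_nonneg) (fun j => ?_) tendsto_one_div_add_atTop_nhds_zero_nat
  simpa only [Real.dist_eq, Fin.val_injective.extend_apply] using ((hp j).2 i).le

end Spectrum

lemma exists_approximates_isotypicTripleProjector_ne_zero {A B : Type*} [Fintype A] [Fintype B]
    [DecidableEq A] [DecidableEq B] {ρ : Matrix (A × B) (A × B) ℂ} (hρ : ρ.PosSemidef)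
    (hρtr : ρ.trace = 1) {ρA : Matrix A A ℂ} (hρA : ∀ a a', ρA a a' = ∑ b, ρ (a, b) (a', b))
    (hρAh : ρA.IsHermitian) {ρB : Matrix B B ℂ}
    (hρB : ∀ b b', ρB b b' = ∑ a, ρ (a, b) (a, b')) (hρBh : ρB.IsHermitian) {dAB dA dB : ℕ}
    {sAB : Fin dAB → ℝ} {sA : Fin dA → ℝ} {sB : Fin dB → ℝ}
    (hsAB_anti : Antitone sAB) (hsA_anti : Antitone sA) (hsB_anti : Antitone sB)
    {eAB : Fin dAB ≃ A × B} {eA : Fin dA ≃ A} {eB : Fin dB ≃ B}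
    (hsAB : ∀ i, sAB i = hρ.isHermitian.eigenvalues (eAB i))
    (hsA : ∀ i, sA i = hρAh.eigenvalues (eA i)) (hsB : ∀ i, sB i = hρBh.eigenvalues (eB i))
    {ε : ℝ} (hε0 : 0 < ε) (hε1 : ε ≤ 1) :
    ∃ k > 0, ∃ p q r : Nat.Partition k, Approximates dAB (Function.extend Fin.val sAB 0) ε p ∧
      Approximates dA (Function.extend Fin.val sA 0) ε q ∧
      Approximates dB (Function.extend Fin.val sB 0) ε r ∧ isotypicTripleProjector p q r ≠ 0 := by
  classical
  have hAB := eventually_sum_isotypicWeight_not_approximates_lt hρ hρtr hsAB hsAB_anti hε0 hε1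
  have hA := eventually_sum_isotypicWeight_not_approximates_lt (posSemidef_of_eq_sum_snd hρ hρA)
    ((trace_eq_of_eq_sum_snd hρA).trans hρtr) hsA hsA_anti hε0 hε1
  have hB := eventually_sum_isotypicWeight_not_approximates_lt (posSemidef_of_eq_sum_fst hρ hρB)
    ((trace_eq_of_eq_sum_fst hρB).trans hρtr) hsB hsB_anti hε0 hε1
  obtain ⟨k, hkAB, hkA, hkB, hk⟩ := (hAB.and (hA.and (hB.and (eventually_gt_atTop 0)))).exists
  obtain ⟨p, hp, q, hq, r, hr, hpqr⟩ :=
    exists_isotypicTripleProjector_ne_zero hρ hρtr hρA hρB hkAB hkA hkB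
  simp only [Finset.mem_filter, Finset.mem_univ, true_and, not_not] at hp hq hr
  exact ⟨k, hk, p, q, r, hp, hq, hr, hpqr⟩

end KroneckerSpectrum

open KroneckerSpectrum

/-- Main theorem: for every density operator `ρ^{AB}` on `ℂ^m ⊗ ℂ^n` with marginals `ρ^A`,
`ρ^B`, there is a sequence of triples of partitions `(lam_j, mu_j, nu_j)` of a common size
`k_j` with non-vanishing Kronecker coefficient `g_{lam_j mu_j nu_j}` such that the normalised
partitions converge to `spec ρ^{AB}`, `spec ρ^A` and `spec ρ^B`, respectively. -/
theorem stmt_13 {m n : ℕ} (hm : 0 < m) (hn : 0 < n)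
    (chi : (k : ℕ) → (ℕ → ℕ) → Equiv.Perm (Fin k) → ℂ) (hchi : IsCharacterFamily chi)
    (g : (k : ℕ) → (ℕ → ℕ) → (ℕ → ℕ) → (ℕ → ℕ) → ℕ) (hg : IsKroneckerFamily chi g)
    (ρ : Matrix (Fin m × Fin n) (Fin m × Fin n) ℂ)
    (hρ : ρ.PosSemidef) (hρtr : ρ.trace = 1)
    (ρA : Matrix (Fin m) (Fin m) ℂ)
    (hρA : ∀ a a', ρA a a' = ∑ b, ρ (a, b) (a', b)) (hρAh : ρA.IsHermitian)
    (ρB : Matrix (Fin n) (Fin n) ℂ)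
    (hρB : ∀ b b', ρB b b' = ∑ a, ρ (a, b) (a, b')) (hρBh : ρB.IsHermitian)
    (sAB : Fin (m * n) → ℝ) (hsAB_anti : Antitone sAB)
    (hsAB : ∃ e : Fin (m * n) ≃ Fin m × Fin n, ∀ i, sAB i = hρ.1.eigenvalues (e i))
    (sA : Fin m → ℝ) (hsA_anti : Antitone sA)
    (hsA : ∃ σ : Equiv.Perm (Fin m), ∀ i, sA i = hρAh.eigenvalues (σ i))
    (sB : Fin n → ℝ) (hsB_anti : Antitone sB)
    (hsB : ∃ σ : Equiv.Perm (Fin n), ∀ i, sB i = hρBh.eigenvalues (σ i)) :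
    ∃ (kseq : ℕ → ℕ) (lam mu nu : ℕ → ℕ → ℕ),
      (∀ j, 0 < kseq j) ∧
      (∀ j, IsPartitionOf (kseq j) (lam j) ∧ ∀ i, m * n ≤ i → lam j i = 0) ∧
      (∀ j, IsPartitionOf (kseq j) (mu j) ∧ ∀ i, m ≤ i → mu j i = 0) ∧
      (∀ j, IsPartitionOf (kseq j) (nu j) ∧ ∀ i, n ≤ i → nu j i = 0) ∧
      (∀ j, g (kseq j) (lam j) (mu j) (nu j) ≠ 0) ∧
      (∀ i : Fin (m * n),
        Tendsto (fun j => (lam j i : ℝ) / (kseq j : ℝ)) atTop (nhds (sAB i))) ∧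
      (∀ i : Fin m,
        Tendsto (fun j => (mu j i : ℝ) / (kseq j : ℝ)) atTop (nhds (sA i))) ∧
      (∀ i : Fin n,
        Tendsto (fun j => (nu j i : ℝ) / (kseq j : ℝ)) atTop (nhds (sB i))) := by
  obtain ⟨e, he⟩ := hsAB
  obtain ⟨σ, hσ⟩ := hsA
  obtain ⟨τ, hτ⟩ := hsB
  have hexists (j : ℕ) := exists_approximates_isotypicTripleProjector_ne_zero
    hρ hρtr hρA hρAh hρB hρBh hsAB_anti hsA_anti hsB_anti he hσ hτ (ε := 1 / ((j : ℝ) + 1))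
    Nat.one_div_pos_of_nat (by simpa using Nat.one_div_le_one_div (α := ℝ) j.zero_le)
  choose kseq hk p q r hp hq hr hpqr using hexists
  exact ⟨kseq, fun j => rowLength (p j), fun j => rowLength (q j), fun j => rowLength (r j), hk,
    fun j => ⟨isPartitionOf_rowLength _, (hp j).1⟩,
    fun j => ⟨isPartitionOf_rowLength _, (hq j).1⟩,
    fun j => ⟨isPartitionOf_rowLength _, (hr j).1⟩,
    fun j => kronecker_ne_zero hchi hg (hpqr j),
    tendsto_rowLength_div hp, tendsto_rowLength_div hq, tendsto_rowLength_div hr⟩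

end
end

section
/- Let λ_j, μ_j, ν_j be sequences of partitions of k_j → ∞ with at most d parts such that λ_j/k_j → p, μ_j/k_j → q, ν_j/k_j → s (probability vectors), and g_{λ_j μ_j ν_j} ≠ 0 for all j. Then H(p) ≤ H(q) + H(s), where H is the Shannon entropy. -/
open Finset Nat

noncomputable section

open Filter

/-!
If the Kronecker coefficient is nonzero, then `U_lam ⊗ U_mu ⊗ U_nu` contains a nonzero invariant
vector. Contracting it with coefficient functionals on the left ideals `U_mu` and `U_nu`, which are
right invariant under the row groups of their tableaux, leaves a nonzero vector of `U_lam` fixed by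
every permutation preserving the word `w a = (row of σ₂ a in t₂, row of σ₃ a in t₃)`. Since the
column antisymmetrizer of `t₁` kills any word repeating a letter within a column, some rearrangement
of `w` has distinct letters in each column of `t₁`. By dominance and Gibbs' inequality the entropy
of the rows of `t₁` is at most that of `w`, which by subadditivity is at most the sum of the
entropies of the rows of `t₂` and `t₃`. This is the entropy inequality at finite `k`, without error
term, and it passes to the limit by continuity.
-/

section Entropy

open scoped BigOperators

variable {α β γ : Type*} [Fintype α] [DecidableEq β] [DecidableEq γ]

/-- The relative frequency of the value `b` of `f`, i.e. the probability that `f X = b` for `X`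
uniformly distributed on `α`. -/
def valueFreq (f : α → β) (b : β) : ℝ :=
  #{a | f a = b} / Fintype.card α

/-- The Shannon entropy of `f X` for `X` uniformly distributed on `α`, written as the mean of the
information content of the value `f a`. -/
def uniformEntropy (f : α → β) : ℝ :=
  𝔼 a, -Real.log (valueFreq f (f a))

lemma valueFreq_nonneg (f : α → β) (b : β) : 0 ≤ valueFreq f b := by
  unfold valueFreq
  positivity

lemma valueFreq_apply_pos (f : α → β) (a : α) : 0 < valueFreq f (f a) :=
  have : Nonempty α := ⟨a⟩
  div_pos (mod_cast card_pos.2 ⟨a, by simp⟩) (mod_cast Fintype.card_pos)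

lemma valueFreq_comp_equiv (f : α → β) (σ : Equiv.Perm α) (b : β) :
    valueFreq (f ∘ σ) b = valueFreq f b := by
  unfold valueFreq
  congr 2
  exact card_equiv σ (by simp)

lemma valueFreq_apply_congr {f : α → β} {g : α → γ} (h : ∀ a b, f a = f b ↔ g a = g b) (a : α) :
    valueFreq f (f a) = valueFreq g (g a) := by
  simp only [valueFreq, h]

lemma expect_comp_eq_sum_valueFreq_mul (f : α → β) {s : Finset β} (hs : ∀ a, f a ∈ s) (h : β → ℝ) :
    𝔼 a, h (f a) = ∑ b ∈ s, valueFreq f b * h b := by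
  rw [Fintype.expect_eq_sum_div_card, ← sum_fiberwise_of_maps_to' (fun a _ ↦ hs a), sum_div]
  refine sum_congr rfl fun b _ ↦ ?_
  rw [sum_const, nsmul_eq_mul, valueFreq, div_mul_eq_mul_div]

lemma sum_valueFreq_le_one (f : α → β) (s : Finset β) : ∑ b ∈ s, valueFreq f b ≤ 1 := by
  simp only [valueFreq]
  rw [← sum_div, ← Nat.cast_sum, sum_card_fiberwise_eq_card_filter]
  exact div_le_one_of_le₀ (mod_cast card_filter_le _ _) (Nat.cast_nonneg _)

lemma uniformEntropy_eq_sum_negMulLog (f : α → β) {s : Finset β} (hs : ∀ a, f a ∈ s) :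
    uniformEntropy f = ∑ b ∈ s, Real.negMulLog (valueFreq f b) := by
  rw [uniformEntropy, expect_comp_eq_sum_valueFreq_mul f hs fun b ↦ -Real.log (valueFreq f b)]
  simp only [Real.negMulLog, neg_mul, mul_neg]

lemma uniformEntropy_comp_equiv (f : α → β) (σ : Equiv.Perm α) :
    uniformEntropy (f ∘ σ) = uniformEntropy f := by
  unfold uniformEntropy
  refine Fintype.expect_equiv σ _ _ fun a ↦ ?_
  rw [valueFreq_comp_equiv, Function.comp_apply]

lemma uniformEntropy_congr {f : α → β} {g : α → γ} (h : ∀ a b, f a = f b ↔ g a = g b) :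
    uniformEntropy f = uniformEntropy g := by
  simp only [uniformEntropy, valueFreq_apply_congr h]

lemma uniformEntropy_le_expect_neg_log [Nonempty α] (f : α → β) (q : β → ℝ)
    (hpos : ∀ a, 0 < q (f a)) (hsum : ∑ b ∈ univ.image f, q b ≤ 1) :
    uniformEntropy f ≤ 𝔼 a, -Real.log (q (f a)) := by
  have hlog (a : α) : -Real.log (valueFreq f (f a)) - -Real.log (q (f a)) ≤
      q (f a) / valueFreq f (f a) - 1 := by
    have hf := valueFreq_apply_pos f a
    have := Real.log_le_sub_one_of_pos (div_pos (hpos a) hf)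
    rw [Real.log_div (hpos a).ne' hf.ne'] at this
    linarith
  have hratio : 𝔼 a, q (f a) / valueFreq f (f a) = ∑ b ∈ univ.image f, q b := by
    rw [expect_comp_eq_sum_valueFreq_mul f (fun a ↦ mem_image_of_mem f (mem_univ a))
      fun b ↦ q b / valueFreq f b]
    refine sum_congr rfl fun b hb ↦ ?_
    obtain ⟨a, -, rfl⟩ := mem_image.1 hb
    exact mul_div_cancel₀ _ (valueFreq_apply_pos f a).ne'
  have hmean := expect_le_expect fun a (_ : a ∈ univ) ↦ hlog a
  rw [expect_sub_distrib, expect_sub_distrib, hratio, Fintype.expect_one] at hmean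
  unfold uniformEntropy
  linarith

lemma sum_image_valueFreq_mul_valueFreq_le_one (f : α → β) (g : α → γ) :
    ∑ x ∈ univ.image (fun a ↦ (f a, g a)), valueFreq f x.1 * valueFreq g x.2 ≤ 1 :=
  calc
    ∑ x ∈ univ.image (fun a ↦ (f a, g a)), valueFreq f x.1 * valueFreq g x.2
      ≤ ∑ x ∈ univ.image f ×ˢ univ.image g, valueFreq f x.1 * valueFreq g x.2 :=
        sum_le_sum_of_subset_of_nonneg
          (image_subset_iff.2 fun a _ ↦ mk_mem_product (by simp) (by simp))
          fun x _ _ ↦ mul_nonneg (valueFreq_nonneg f _) (valueFreq_nonneg g _)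
    _ = (∑ b ∈ univ.image f, valueFreq f b) * ∑ c ∈ univ.image g, valueFreq g c := by
        rw [sum_mul_sum, sum_product]
    _ ≤ 1 := mul_le_one₀ (sum_valueFreq_le_one f _)
        (sum_nonneg fun c _ ↦ valueFreq_nonneg g c) (sum_valueFreq_le_one g _)

lemma uniformEntropy_prodMk_le [Nonempty α] (f : α → β) (g : α → γ) :
    uniformEntropy (fun a ↦ (f a, g a)) ≤ uniformEntropy f + uniformEntropy g := by
  have hlog (a : α) : -Real.log (valueFreq f (f a) * valueFreq g (g a)) =
      -Real.log (valueFreq f (f a)) + -Real.log (valueFreq g (g a)) := by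
    rw [Real.log_mul (valueFreq_apply_pos f a).ne' (valueFreq_apply_pos g a).ne', neg_add]
  have hgibbs := uniformEntropy_le_expect_neg_log (fun a ↦ (f a, g a))
    (fun x ↦ valueFreq f x.1 * valueFreq g x.2)
    (fun a ↦ mul_pos (valueFreq_apply_pos f a) (valueFreq_apply_pos g a))
    (sum_image_valueFreq_mul_valueFreq_le_one f g)
  simpa only [uniformEntropy, hlog, expect_add_distrib] using hgibbs

end Entropy

section Dominance

open scoped BigOperators

variable {α β γ : Type*} [Fintype α]

lemma exists_equiv_fin_antitone {ι κ : Type*} [Fintype ι] [LinearOrder κ] (n : ι → κ) :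
    ∃ e : ι ≃ Fin (Fintype.card ι), Antitone (n ∘ e.symm) := by
  let e₀ := Fintype.equivFin ι
  let σ := Tuple.sort (OrderDual.toDual ∘ n ∘ e₀.symm)
  exact ⟨e₀.trans σ.symm, Tuple.monotone_sort (OrderDual.toDual ∘ n ∘ e₀.symm)⟩

lemma exists_nat_relabel_antitone_valueFreq (w : α → β) :
    ∃ ρ : α → ℕ, (∀ a b, ρ a = ρ b ↔ w a = w b) ∧ Antitone (valueFreq ρ) := by
  classical
  obtain ⟨e, he⟩ := exists_equiv_fin_antitone fun b : univ.image w ↦ valueFreq w b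
  let ρ (a : α) : ℕ := e ⟨w a, mem_image_of_mem w (mem_univ a)⟩
  have hρ (r : Fin _) : valueFreq ρ r = valueFreq w (e.symm r) := by
    simp only [valueFreq, ρ, Fin.val_inj, ← Equiv.eq_symm_apply, Subtype.ext_iff]
  refine ⟨ρ, fun a b ↦ by simp [ρ, Fin.val_inj], fun r s hrs ↦ ?_⟩
  by_cases hs : s < Fintype.card (univ.image w)
  · rw [hρ ⟨s, hs⟩, hρ ⟨r, hrs.trans_lt hs⟩]
    exact he hrs
  · have : valueFreq ρ s = 0 := by
      have hne (a : α) : ρ a ≠ s := ((e _).isLt.trans_le (not_lt.1 hs)).ne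
      simp [valueFreq, hne]
    exact this.trans_le (valueFreq_nonneg ρ r)

/-- Within a column the entry in row `r` is sent to the one with the `r`-th smallest value
of `ρ`. -/
lemma exists_perm_fst_le [DecidableEq γ] {t : α → ℕ × γ} (ht : t.Injective)
    (hcol : ∀ a, (t a).1 < #{b | (t b).2 = (t a).2}) {ρ : α → ℕ}
    (hρ : Function.Injective fun a ↦ (ρ a, (t a).2)) :
    ∃ τ : Equiv.Perm α, ∀ a, (t a).1 ≤ ρ (τ a) := by
  let p (c : γ) (n : ℕ) : Prop := ∃ a, (t a).2 = c ∧ ρ a = n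
  have hlt (a : α) (hf : (Set.ofPred (p (t a).2)).Finite) : (t a).1 < #hf.toFinset := by
    refine (hcol a).trans_le (card_le_card_of_injOn ρ (fun b hb ↦ ?_) fun b hb c hc hbc ↦ ?_)
    · simpa [p] using ⟨b, by simpa using hb, rfl⟩
    · simp only [coe_filter, mem_univ, true_and, Set.mem_ofPred_eq] at hb hc
      exact hρ (Prod.ext hbc (hb.trans hc.symm))
  have hfin (c : γ) : (Set.ofPred (p c)).Finite :=
    (Set.finite_range ρ).subset fun n ⟨a, _, ha⟩ ↦ ⟨a, ha⟩
  choose τ hτcol hτ using fun a ↦ Nat.nth_mem_of_lt_card (hfin _) (hlt a (hfin _))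
  have hτinj : τ.Injective := fun a b hab ↦ by
    have hc : (t a).2 = (t b).2 := by rw [← hτcol a, ← hτcol b, hab]
    have hnth : Nat.nth (p (t b).2) (t a).1 = Nat.nth (p (t b).2) (t b).1 := by
      rw [← hτ b, ← hab, hτ a, hc]
    exact ht (Prod.ext (Nat.nth_injOn (hfin _) (hc ▸ hlt a (hfin _)) (hlt b (hfin _)) hnth) hc)
  refine ⟨Equiv.ofBijective τ (Finite.injective_iff_bijective.1 hτinj), fun a ↦ ?_⟩
  exact (Nat.le_nth fun hf ↦ hlt a hf).trans_eq (hτ a).symm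

/-- A filling `w` of a diagram whose columns have distinct entries has type dominated by
the shape; this is the resulting comparison of entropies. -/
lemma uniformEntropy_fst_le [Nonempty α] [DecidableEq β] [DecidableEq γ] {t : α → ℕ × γ}
    (ht : t.Injective)
    (hcol : ∀ a, (t a).1 < #{b | (t b).2 = (t a).2}) {w : α → β}
    (hw : Function.Injective fun a ↦ (w a, (t a).2)) :
    uniformEntropy (fun a ↦ (t a).1) ≤ uniformEntropy w := by
  obtain ⟨ρ, hρw, hanti⟩ := exists_nat_relabel_antitone_valueFreq w
  have hρ : Function.Injective fun a ↦ (ρ a, (t a).2) := fun a b hab ↦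
    hw (Prod.ext ((hρw a b).1 (congrArg Prod.fst hab)) (congrArg Prod.snd hab :))
  obtain ⟨τ, hτ⟩ := exists_perm_fst_le ht hcol hρ
  have hpos (a : α) : 0 < valueFreq ρ (ρ (τ a)) := valueFreq_apply_pos ρ (τ a)
  calc
    uniformEntropy (fun a ↦ (t a).1)
      ≤ 𝔼 a, -Real.log (valueFreq ρ (t a).1) :=
        uniformEntropy_le_expect_neg_log _ _ (fun a ↦ (hpos a).trans_le (hanti (hτ a)))
          (sum_valueFreq_le_one ρ _)
    _ ≤ 𝔼 a, -Real.log (valueFreq ρ (ρ (τ a))) :=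
        expect_le_expect fun a _ ↦ neg_le_neg (Real.log_le_log (hpos a) (hanti (hτ a)))
    _ = uniformEntropy ρ := Fintype.expect_equiv τ _ _ fun _ ↦ rfl
    _ = uniformEntropy w := uniformEntropy_congr hρw

end Dominance

section Symmetrizer

open Equiv (Perm)
open MonoidAlgebra (single)

variable (R : Type*) [CommRing R] {α β γ : Type*} [Fintype α] [DecidableEq α] [DecidableEq β]

/-- The sum in the group algebra of the permutations preserving the fibres of `f`. -/
def symmetrizer (f : α → β) : MonoidAlgebra R (Perm α) :=
  ∑ π : Perm α with ∀ a, f (π a) = f a, single π 1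

/-- The signed sum in the group algebra of the permutations preserving the fibres of `f`. -/
def antisymmetrizer (f : α → β) : MonoidAlgebra R (Perm α) :=
  ∑ π : Perm α with ∀ a, f (π a) = f a, single π ((Perm.sign π : ℤ) : R)

variable {R}

lemma symmetrizer_mul_single {f : α → β} {g : Perm α} (hg : ∀ a, f (g a) = f a) :
    symmetrizer R f * single g 1 = symmetrizer R f := by
  simp only [symmetrizer, sum_mul, MonoidAlgebra.single_mul_single, mul_one]
  refine sum_equiv (Equiv.mulRight g) (fun π ↦ ?_) fun _ _ ↦ rfl
  simp only [mem_filter, mem_univ, true_and, Equiv.coe_mulRight, Perm.mul_apply]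
  conv_lhs => rw [← g.forall_congr_right]
  simp only [hg]

lemma single_mul_antisymmetrizer {f : α → β} {g : Perm α} (hg : ∀ a, f (g a) = f a) :
    single g 1 * antisymmetrizer R f = (Perm.sign g : ℤ) • antisymmetrizer R f := by
  simp only [antisymmetrizer, mul_sum, smul_sum, MonoidAlgebra.single_mul_single, one_mul]
  refine sum_equiv (Equiv.mulLeft g) (fun π ↦ ?_) fun π _ ↦ ?_
  · simp [hg]
  · rw [← Int.cast_smul_eq_zsmul R, MonoidAlgebra.smul_single, Equiv.coe_mulLeft, Perm.sign_mul]
    simp [← mul_assoc, ← Int.cast_mul, ← Units.val_mul]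

lemma symmetrizer_mul_of_forall_single_mul_eq {w : α → β} {z : MonoidAlgebra R (Perm α)}
    (hz : ∀ g : Perm α, (∀ a, w (g a) = w a) → single g 1 * z = z) :
    symmetrizer R w * z = #{π : Perm α | ∀ a, w (π a) = w a} • z := by
  rw [symmetrizer, sum_mul, ← sum_const]
  exact sum_congr rfl fun g hg ↦ hz g (mem_filter.1 hg).2

instance isAddTorsionFree_monoidAlgebra {R M : Type*} [Semiring R] [IsAddTorsionFree R] :
    IsAddTorsionFree (MonoidAlgebra R M) :=
  MonoidAlgebra.coeffAddEquiv.injective.isAddTorsionFree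
    (MonoidAlgebra.coeffAddEquiv (R := R) (M := M)).toAddMonoidHom

variable [IsAddTorsionFree R]

/-- The transposition of two points in a common fibre of `f` and of `w ∘ σ` is absorbed with sign
`+1` on the left and `-1` on the right. -/
lemma symmetrizer_mul_single_mul_antisymmetrizer_eq_zero [DecidableEq γ] {f : α → γ} {w : α → β}
    {σ : Perm α}
    (hσ : ¬ Function.Injective fun a ↦ (w (σ a), f a)) :
    symmetrizer R w * single σ 1 * antisymmetrizer R f = 0 := by
  obtain ⟨a, b, hab, hne⟩ := Function.not_injective_iff.1 hσ
  obtain ⟨hw, hf⟩ := Prod.mk.inj hab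
  have hleft := symmetrizer_mul_single (R := R) (Equiv.apply_swap_eq_self hw)
  have hright := single_mul_antisymmetrizer (R := R) (Equiv.apply_swap_eq_self hf)
  rw [Perm.sign_swap hne, Units.val_neg, Units.val_one, neg_one_zsmul] at hright
  refine self_eq_neg.1 ?_
  calc
    symmetrizer R w * single σ 1 * antisymmetrizer R f
      = symmetrizer R w * single (Equiv.swap (σ a) (σ b) * σ) 1 * antisymmetrizer R f := by
        conv_lhs => rw [← hleft, mul_assoc (symmetrizer R w), MonoidAlgebra.single_mul_single,
          mul_one]
    _ = symmetrizer R w * single σ 1 * (single (Equiv.swap a b) 1 * antisymmetrizer R f) := by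
        rw [← Equiv.mul_swap_eq_swap_mul, ← mul_assoc, mul_assoc (symmetrizer R w) (single σ 1),
          MonoidAlgebra.single_mul_single, mul_one]
    _ = -(symmetrizer R w * single σ 1 * antisymmetrizer R f) := by rw [hright, mul_neg]

lemma symmetrizer_mul_mul_antisymmetrizer_eq_zero [DecidableEq γ] {f : α → γ} {w : α → β}
    (h : ∀ σ : Perm α, ¬ Function.Injective fun a ↦ (w (σ a), f a))
    (x : MonoidAlgebra R (Perm α)) : symmetrizer R w * x * antisymmetrizer R f = 0 := by
  induction x using MonoidAlgebra.induction_linear with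
  | zero => simp
  | add x y hx hy => rw [mul_add, add_mul, hx, hy, add_zero]
  | single σ r =>
    have hsingle : (single σ r : MonoidAlgebra R (Perm α)) = r • single σ 1 := by simp
    rw [hsingle, mul_smul_comm, smul_mul_assoc,
      symmetrizer_mul_single_mul_antisymmetrizer_eq_zero (h σ), smul_zero]

lemma exists_perm_injective_of_mul_antisymmetrizer_mul_ne_zero {f : α → β} {w : α → γ}
    {x y : MonoidAlgebra R (Perm α)} (hne : x * antisymmetrizer R f * y ≠ 0)
    (hfix : ∀ g : Perm α, (∀ a, w (g a) = w a) →
      single g 1 * (x * antisymmetrizer R f * y) = x * antisymmetrizer R f * y) :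
    ∃ σ : Perm α, Function.Injective fun a ↦ (w (σ a), f a) := by
  classical
  by_contra! h
  have hzero : symmetrizer R w * (x * antisymmetrizer R f * y) = 0 := by
    rw [← mul_assoc, ← mul_assoc, symmetrizer_mul_mul_antisymmetrizer_eq_zero h, zero_mul]
  rw [symmetrizer_mul_of_forall_single_mul_eq hfix] at hzero
  have hcard : #{π : Perm α | ∀ a, w (π a) = w a} ≠ 0 := card_ne_zero.2 ⟨1, by simp⟩
  exact smul_ne_zero hcard hne hzero

end Symmetrizer

section Contraction

open TensorProduct

variable {R G U V : Type*} [CommRing R] [Monoid G] [AddCommGroup U] [Module R U]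
  [AddCommGroup V] [Module R V]

/-- Contraction of the second tensor factor with a linear form. -/
def contractDual (U : Type*) [AddCommGroup U] [Module R U] (ℓ : Module.Dual R V) :
    U ⊗[R] V →ₗ[R] U :=
  (TensorProduct.rid R U).toLinearMap ∘ₗ ℓ.lTensor U

@[simp]
lemma contractDual_tmul (ℓ : Module.Dual R V) (u : U) (v : V) :
    contractDual U ℓ (u ⊗ₜ v) = ℓ v • u := by
  simp [contractDual]

lemma contractDual_tprod (ρ : Representation R G U) (σ : Representation R G V)
    (ℓ : Module.Dual R V) (g : G) (x : U ⊗[R] V) :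
    contractDual U ℓ (ρ.tprod σ g x) = ρ g (contractDual U (ℓ ∘ₗ σ g) x) := by
  induction x using TensorProduct.induction_on with
  | zero => simp
  | tmul u v => simp [Representation.tprod_apply]
  | add x y hx hy => simp only [map_add, hx, hy]

lemma exists_contractDual_ne_zero [Module.Free R U] {ι : Type*} {ℓ : ι → Module.Dual R V}
    (hℓ : ∀ v, (∀ i, ℓ i v = 0) → v = 0) {x : U ⊗[R] V} (hx : x ≠ 0) :
    ∃ i, contractDual U (ℓ i) x ≠ 0 := by
  let b := Module.Free.chooseBasis R U
  have hrepr (i : ι) (m) (y : U ⊗[R] V) : b.repr (contractDual U (ℓ i) y) m =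
      ℓ i (TensorProduct.equivFinsuppOfBasisLeft b y m) := by
    induction y using TensorProduct.induction_on with
    | zero => simp
    | tmul u v => simp [mul_comm]
    | add y z hy hz => simp only [map_add, Finsupp.add_apply, hy, hz]
  by_contra! h
  refine hx ((TensorProduct.equivFinsuppOfBasisLeft b).map_eq_zero_iff.1 (Finsupp.ext fun m ↦ ?_))
  exact hℓ _ fun i ↦ by rw [← hrepr, h i, map_zero, Finsupp.zero_apply]

lemma exists_ne_zero_fixed_of_tprod_fixed [Module.Free R U] {ι : Type*}
    {ℓ : ι → Module.Dual R V} (hℓ : ∀ v, (∀ i, ℓ i v = 0) → v = 0) (ρ : Representation R G U)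
    (σ : Representation R G V) {S : Set G} {x : U ⊗[R] V} (hx : x ≠ 0)
    (hfix : ∀ g ∈ S, ρ.tprod σ g x = x) :
    ∃ i, ∃ u ≠ 0, ∀ g ∈ S, ℓ i ∘ₗ σ g = ℓ i → ρ g u = u := by
  obtain ⟨i, hi⟩ := exists_contractDual_ne_zero hℓ hx
  refine ⟨i, _, hi, fun g hg hℓg ↦ ?_⟩
  rw [← hℓg, ← contractDual_tprod, hℓg, hfix g hg]

end Contraction

section LeftIdeal

open TensorProduct
open Equiv (Perm)
open MonoidAlgebra (single)

variable {R G : Type*} [CommRing R] [Monoid G]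

/-- The left ideal of the group algebra generated by `e`, as a linear subspace. -/
def leftIdeal (e : MonoidAlgebra R G) : Submodule R (MonoidAlgebra R G) :=
  LinearMap.range (LinearMap.mulRight R e)

lemma single_mul_mem_leftIdeal (e : MonoidAlgebra R G) (g : G) {x : MonoidAlgebra R G}
    (hx : x ∈ leftIdeal e) : single g 1 * x ∈ leftIdeal e := by
  obtain ⟨a, rfl⟩ := hx
  exact ⟨single g 1 * a, mul_assoc ..⟩

/-- The action of the group by left multiplication on the left ideal generated by `e`. -/
def leftIdealRep (e : MonoidAlgebra R G) : Representation R G (leftIdeal e) where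
  toFun g := (LinearMap.mulLeft R (single g 1)).restrict fun _ ↦ single_mul_mem_leftIdeal e g
  map_one' := by
    ext1 x
    exact Subtype.ext (one_mul x.1)
  map_mul' g h := by
    ext1 x
    refine Subtype.ext ?_
    change single (g * h) 1 * x.1 = single g 1 * (single h 1 * x.1)
    rw [← mul_assoc, MonoidAlgebra.single_mul_single, one_mul]

@[simp]
lemma coe_leftIdealRep_apply (e : MonoidAlgebra R G) (g : G) (x : leftIdeal e) :
    (leftIdealRep e g x : MonoidAlgebra R G) = single g 1 * (x : MonoidAlgebra R G) :=
  rfl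

/-- The linear form on a left ideal of the group algebra reading off the coefficient at `c`. -/
def leftIdealCoeff (e : MonoidAlgebra R G) (c : G) : Module.Dual R (leftIdeal e) :=
  Finsupp.lapply c ∘ₗ (MonoidAlgebra.coeffLinearEquiv R).toLinearMap ∘ₗ Submodule.subtype _

lemma eq_zero_of_forall_leftIdealCoeff_eq_zero {e : MonoidAlgebra R G} (v : leftIdeal e)
    (hv : ∀ c, leftIdealCoeff e c v = 0) : v = 0 :=
  Subtype.ext (MonoidAlgebra.ext (Finsupp.ext hv))

lemma leftIdealCoeff_comp_apply {G : Type*} [Group G] (e : MonoidAlgebra R G) (c g : G) :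
    leftIdealCoeff e c ∘ₗ (leftIdealRep e) g = leftIdealCoeff e (g⁻¹ * c) := by
  ext x
  simp [leftIdealCoeff]

variable {α β γ δ : Type*} [Fintype α] [DecidableEq α] [DecidableEq β] [DecidableEq γ]
  [DecidableEq δ]

lemma leftIdealCoeff_mul_symmetrizer (e : MonoidAlgebra R (Perm α)) {f : α → β} (c : Perm α)
    {h : Perm α} (hh : ∀ a, f (h a) = f a) :
    leftIdealCoeff (e * symmetrizer R f) (c * h) = leftIdealCoeff (e * symmetrizer R f) c := by
  ext ⟨x, a, rfl⟩
  have hx : a * (e * symmetrizer R f) * single h 1 = a * (e * symmetrizer R f) := by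
    simp only [mul_assoc, symmetrizer_mul_single hh]
  change (a * (e * symmetrizer R f)).coeff (c * h) = (a * (e * symmetrizer R f)).coeff c
  rw [← hx, MonoidAlgebra.coeff_mul_single_mul, hx, mul_one]

variable {K : Type*} [Field K]

lemma exists_ne_zero_fixed_of_tprod_leftIdealRep_fixed {U : Type*} [AddCommGroup U] [Module K U]
    (ρ : Representation K (Perm α) U) (e : MonoidAlgebra K (Perm α)) (f : α → β)
    {S : Set (Perm α)} {x : U ⊗[K] leftIdeal (e * symmetrizer K f)} (hx : x ≠ 0)
    (hfix : ∀ g ∈ S, ρ.tprod (leftIdealRep (e * symmetrizer K f)) g x = x) :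
    ∃ σ : Perm α, ∃ u ≠ 0, ∀ g ∈ S, (∀ a, f (σ (g a)) = f (σ a)) → ρ g u = u := by
  obtain ⟨c, u, hu, hfixu⟩ := exists_ne_zero_fixed_of_tprod_fixed
    eq_zero_of_forall_leftIdealCoeff_eq_zero ρ _ hx hfix
  refine ⟨c⁻¹, u, hu, fun g hg hσ ↦ hfixu g hg ?_⟩
  have hrow (a : α) : f ((c⁻¹ * g⁻¹ * c) a) = f a := by
    simpa using (hσ (g⁻¹ (c a))).symm
  rw [leftIdealCoeff_comp_apply, ← leftIdealCoeff_mul_symmetrizer e c hrow]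
  congr 1
  group

variable {G U V W : Type*} [Group G] [Fintype G] [NeZero (Nat.card G : K)]
  [AddCommGroup U] [Module K U] [FiniteDimensional K U]
  [AddCommGroup V] [Module K V] [FiniteDimensional K V]
  [AddCommGroup W] [Module K W] [FiniteDimensional K W]
  {ρ : Representation K G U} {σ : Representation K G V} {τ : Representation K G W}

lemma exists_ne_zero_fixed_of_sum_character_ne_zero (h : ∑ g, ρ.character g ≠ 0) :
    ∃ x ≠ 0, ∀ g, ρ g x = x := by
  have hcard := NeZero.ne (Nat.card G : K)
  have := invertibleOfNonzero hcard
  have hinvariants : ρ.invariants ≠ ⊥ := fun hbot ↦ by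
    have hrank := ρ.card_inv_mul_sum_char_eq_finrank
    rw [hbot, finrank_bot, Nat.cast_zero] at hrank
    exact mul_ne_zero (inv_ne_zero hcard) h hrank
  obtain ⟨x, hx, hx0⟩ := Submodule.exists_mem_ne_zero_of_ne_bot hinvariants
  exact ⟨x, hx0, hx⟩

lemma exists_ne_zero_fixed_of_sum_character_mul_ne_zero
    (h : ∑ g, ρ.character g * σ.character g * τ.character g ≠ 0) :
    ∃ x ≠ 0, ∀ g, (ρ.tprod σ).tprod τ g x = x := by
  refine exists_ne_zero_fixed_of_sum_character_ne_zero ?_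
  simpa only [Representation.char_tensor, Pi.mul_apply] using h

variable [CharZero K]

lemma exists_perm_ne_zero_fixed_of_sum_character_ne_zero
    {ρ : Representation K (Perm α) U} {f₂ : α → β} {f₃ : α → γ}
    {e₂ e₃ : MonoidAlgebra K (Perm α)}
    (h : ∑ π, ρ.character π * (leftIdealRep (e₂ * symmetrizer K f₂)).character π *
      (leftIdealRep (e₃ * symmetrizer K f₃)).character π ≠ 0) :
    ∃ σ₂ σ₃ : Perm α, ∃ u ≠ 0, ∀ g : Perm α, (∀ a, f₂ (σ₂ (g a)) = f₂ (σ₂ a)) →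
      (∀ a, f₃ (σ₃ (g a)) = f₃ (σ₃ a)) → ρ g u = u := by
  have : NeZero (Nat.card (Perm α) : K) := ⟨Nat.cast_ne_zero.2 Nat.card_pos.ne'⟩
  obtain ⟨x, hx, hfix⟩ := exists_ne_zero_fixed_of_sum_character_mul_ne_zero h
  obtain ⟨σ₃, y, hy, hfixy⟩ := exists_ne_zero_fixed_of_tprod_leftIdealRep_fixed _ e₃ f₃
    (S := Set.univ) hx fun g _ ↦ hfix g
  obtain ⟨σ₂, z, hz, hfixz⟩ := exists_ne_zero_fixed_of_tprod_leftIdealRep_fixed ρ e₂ f₂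
    (S := {g | ∀ a, f₃ (σ₃ (g a)) = f₃ (σ₃ a)}) hy fun g hg ↦ hfixy g (Set.mem_univ g) hg
  exact ⟨σ₂, σ₃, z, hz, fun g h₂ h₃ ↦ hfixz g h₃ h₂⟩

lemma exists_perm_injective_of_sum_character_ne_zero {f₁ : α → β} {f₂ : α → γ} {f₃ : α → δ}
    {e₁ e₂ e₃ : MonoidAlgebra K (Perm α)}
    (h : ∑ π, (leftIdealRep (antisymmetrizer K f₁ * e₁)).character π *
      (leftIdealRep (e₂ * symmetrizer K f₂)).character π *
      (leftIdealRep (e₃ * symmetrizer K f₃)).character π ≠ 0) :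
    ∃ σ₂ σ₃ : Perm α, Function.Injective fun a ↦ ((f₂ (σ₂ a), f₃ (σ₃ a)), f₁ a) := by
  obtain ⟨σ₂, σ₃, ⟨_, a, rfl⟩, hz, hfix⟩ := exists_perm_ne_zero_fixed_of_sum_character_ne_zero h
  have hmul : LinearMap.mulRight K (antisymmetrizer K f₁ * e₁) a = a * antisymmetrizer K f₁ * e₁ :=
    (mul_assoc ..).symm
  have hne : a * antisymmetrizer K f₁ * e₁ ≠ 0 := fun h0 ↦ hz (Subtype.ext (hmul.trans h0))
  obtain ⟨σ, hσ⟩ := exists_perm_injective_of_mul_antisymmetrizer_mul_ne_zero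
    (w := fun a ↦ (f₂ (σ₂ a), f₃ (σ₃ a))) hne fun g hg ↦ by
      rw [← hmul]
      exact congrArg Subtype.val
        (hfix g (fun b ↦ (Prod.mk.inj (hg b)).1) fun b ↦ (Prod.mk.inj (hg b)).2)
  exact ⟨σ₂ * σ, σ₃ * σ, hσ⟩

end LeftIdeal

section Tableau

variable {k : ℕ} {t t₁ t₂ t₃ : Fin k → ℕ × ℕ}

lemma youngSym_eq_antisymmetrizer_mul_symmetrizer (t : Fin k → ℕ × ℕ) :
    youngSym k t = antisymmetrizer ℂ (fun i ↦ (t i).2) * symmetrizer ℂ fun i ↦ (t i).1 := by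
  simp only [youngSym, antisymmetrizer, symmetrizer]

lemma youngIdealChar_eq_character (t : Fin k → ℕ × ℕ) (π : Equiv.Perm (Fin k)) :
    youngIdealChar k t π = (leftIdealRep (antisymmetrizer ℂ (fun i ↦ (t i).2) *
      symmetrizer ℂ fun i ↦ (t i).1)).character π := by
  rw [← youngSym_eq_antisymmetrizer_mul_symmetrizer]
  rfl

lemma uniformEntropy_row_le_of_sum_youngIdealChar_ne_zero [NeZero k] (ht : t₁.Injective)
    (hcol : ∀ i, (t₁ i).1 < #{j | (t₁ j).2 = (t₁ i).2})
    (hsum : ∑ π, youngIdealChar k t₁ π * youngIdealChar k t₂ π * youngIdealChar k t₃ π ≠ 0) :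
    uniformEntropy (fun i ↦ (t₁ i).1) ≤
      uniformEntropy (fun i ↦ (t₂ i).1) + uniformEntropy fun i ↦ (t₃ i).1 := by
  simp only [youngIdealChar_eq_character] at hsum
  obtain ⟨σ₂, σ₃, hσ⟩ := exists_perm_injective_of_sum_character_ne_zero hsum
  calc
    uniformEntropy (fun i ↦ (t₁ i).1)
      ≤ uniformEntropy (fun i ↦ ((t₂ (σ₂ i)).1, (t₃ (σ₃ i)).1)) := uniformEntropy_fst_le ht hcol hσ
    _ ≤ uniformEntropy (fun i ↦ (t₂ (σ₂ i)).1) + uniformEntropy fun i ↦ (t₃ (σ₃ i)).1 :=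
        uniformEntropy_prodMk_le ..
    _ = uniformEntropy (fun i ↦ (t₂ i).1) + uniformEntropy fun i ↦ (t₃ i).1 :=
        congrArg₂ (· + ·) (uniformEntropy_comp_equiv (fun i ↦ (t₂ i).1) σ₂)
          (uniformEntropy_comp_equiv (fun i ↦ (t₃ i).1) σ₃)

end Tableau

namespace IsPartitionOf

variable {k d : ℕ} {lam : ℕ → ℕ} {t : Fin k → ℕ × ℕ}

lemma apply_le_s14 (h : IsPartitionOf k lam) (i : ℕ) : lam i ≤ k := by
  obtain ⟨-, hzero, hsum⟩ := h
  by_cases hi : i < k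
  · exact (single_le_sum_of_canonicallyOrdered (mem_range.2 hi)).trans_eq hsum
  · exact (hzero i (not_lt.1 hi)).trans_le k.zero_le

lemma mem_youngCells_iff (h : IsPartitionOf k lam) {c : ℕ × ℕ} :
    c ∈ youngCells k lam ↔ c.2 < lam c.1 := by
  simp only [youngCells, mem_filter, mem_product, mem_range, and_iff_right_iff_imp]
  refine fun hc ↦ ⟨not_le.1 fun hk ↦ ?_, hc.trans_le (h.apply_le_s14 _)⟩
  exact Nat.not_lt_zero _ (h.2.1 _ hk ▸ hc)

lemma card_filter_fst_youngCells (h : IsPartitionOf k lam) (r : ℕ) :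
    #{c ∈ youngCells k lam | c.1 = r} = lam r := by
  have hrow : {c ∈ youngCells k lam | c.1 = r} = {r} ×ˢ range (lam r) := by
    ext ⟨a, b⟩
    simp only [mem_filter, h.mem_youngCells_iff, mem_product, mem_singleton, mem_range]
    grind
  rw [hrow, card_product, card_singleton, card_range, one_mul]

lemma card_youngCells (h : IsPartitionOf k lam) : #(youngCells k lam) = k := by
  have hmaps : Set.MapsTo Prod.fst (youngCells k lam : Set (ℕ × ℕ)) (range k) := fun c hc ↦
    (mem_product.1 (mem_filter.1 hc).1).1
  rw [card_eq_sum_card_fiberwise hmaps]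
  exact (sum_congr rfl fun r _ ↦ h.card_filter_fst_youngCells r).trans h.2.2

lemma exists_bijOn_youngCells (h : IsPartitionOf k lam) :
    ∃ t : Fin k → ℕ × ℕ, Set.BijOn t Set.univ (youngCells k lam) := by
  let e := (youngCells k lam).equivFinOfCardEq h.card_youngCells
  refine ⟨fun i ↦ e.symm i, fun i _ ↦ (e.symm i).2, ?_, fun c hc ↦ ⟨e ⟨c, hc⟩, trivial, by simp⟩⟩
  exact (Subtype.val_injective.comp e.symm.injective).injOn

lemma card_filter_fst (h : IsPartitionOf k lam) (ht : Set.BijOn t Set.univ (youngCells k lam))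
    (r : ℕ) : #{i | (t i).1 = r} = lam r := by
  rw [← h.card_filter_fst_youngCells r]
  refine card_bij (fun i _ ↦ t i) (fun i hi ↦ ?_)
    (fun i _ j _ hij ↦ ht.injOn trivial trivial hij) fun c hc ↦ ?_
  · exact mem_filter.2 ⟨ht.mapsTo trivial, (mem_filter.1 hi).2⟩
  · obtain ⟨hcell, hrow⟩ := mem_filter.1 hc
    obtain ⟨i, -, rfl⟩ := ht.surjOn hcell
    exact ⟨i, by simp [hrow], rfl⟩

lemma fst_lt_card_filter_snd (h : IsPartitionOf k lam)
    (ht : Set.BijOn t Set.univ (youngCells k lam)) (i : Fin k) :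
    (t i).1 < #{j | (t j).2 = (t i).2} := by
  have hmem {r : ℕ} (hr : r ≤ (t i).1) : (r, (t i).2) ∈ youngCells k lam :=
    h.mem_youngCells_iff.2 ((h.mem_youngCells_iff.1 (ht.mapsTo (Set.mem_univ i))).trans_le
      (h.1 hr))
  rw [Nat.lt_iff_add_one_le, ← card_range ((t i).1 + 1)]
  refine card_le_card_of_surjOn (fun j ↦ (t j).1) fun r hr ↦ ?_
  obtain ⟨j, -, hj⟩ := ht.surjOn (hmem (Nat.lt_succ_iff.1 (mem_range.1 hr)))
  exact ⟨j, by simp [hj], by simp [hj]⟩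

lemma uniformEntropy_fst (h : IsPartitionOf k lam) (hd : ∀ i, d ≤ i → lam i = 0)
    (ht : Set.BijOn t Set.univ (youngCells k lam)) :
    uniformEntropy (fun i ↦ (t i).1) = ∑ r : Fin d, Real.negMulLog (lam r / k) := by
  have hrow (i : Fin k) : (t i).1 ∈ range d := by
    refine mem_range.2 (not_le.1 fun hi ↦ ?_)
    exact Nat.not_lt_zero _ (hd _ hi ▸ h.mem_youngCells_iff.1 (ht.mapsTo (Set.mem_univ i)))
  rw [uniformEntropy_eq_sum_negMulLog _ hrow, sum_range]
  simp only [valueFreq, h.card_filter_fst ht, Fintype.card_fin]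

end IsPartitionOf

namespace IsKroneckerFamily

variable {chi : (k : ℕ) → (ℕ → ℕ) → Equiv.Perm (Fin k) → ℂ}
  {g : (k : ℕ) → (ℕ → ℕ) → (ℕ → ℕ) → (ℕ → ℕ) → ℕ} {k d : ℕ} {lam mu nu : ℕ → ℕ}

lemma sum_youngIdealChar_ne_zero (hg : IsKroneckerFamily chi g)
    (hchi : IsCharacterFamily chi) (hlam : IsPartitionOf k lam)
    (hmu : IsPartitionOf k mu) (hnu : IsPartitionOf k nu) {t₁ t₂ t₃ : Fin k → ℕ × ℕ}
    (ht₁ : Set.BijOn t₁ Set.univ (youngCells k lam)) (ht₂ : Set.BijOn t₂ Set.univ (youngCells k mu))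
    (ht₃ : Set.BijOn t₃ Set.univ (youngCells k nu)) (hg0 : g k lam mu nu ≠ 0) :
    ∑ π, youngIdealChar k t₁ π * youngIdealChar k t₂ π * youngIdealChar k t₃ π ≠ 0 := by
  have hformula := hg k lam mu nu hlam hmu hnu
  simp only [hchi k lam hlam t₁ ht₁, hchi k mu hmu t₂ ht₂, hchi k nu hnu t₃ ht₃] at hformula
  exact right_ne_zero_of_mul (hformula ▸ Nat.cast_ne_zero.2 hg0)

lemma sum_negMulLog_le (hg : IsKroneckerFamily chi g)
    (hchi : IsCharacterFamily chi) [NeZero k]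
    (hlam : IsPartitionOf k lam ∧ ∀ i, d ≤ i → lam i = 0)
    (hmu : IsPartitionOf k mu ∧ ∀ i, d ≤ i → mu i = 0)
    (hnu : IsPartitionOf k nu ∧ ∀ i, d ≤ i → nu i = 0) (hg0 : g k lam mu nu ≠ 0) :
    ∑ i : Fin d, Real.negMulLog (lam i / k) ≤
      ∑ i : Fin d, Real.negMulLog (mu i / k) + ∑ i : Fin d, Real.negMulLog (nu i / k) := by
  obtain ⟨t₁, ht₁⟩ := hlam.1.exists_bijOn_youngCells
  obtain ⟨t₂, ht₂⟩ := hmu.1.exists_bijOn_youngCells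
  obtain ⟨t₃, ht₃⟩ := hnu.1.exists_bijOn_youngCells
  rw [← hlam.1.uniformEntropy_fst hlam.2 ht₁, ← hmu.1.uniformEntropy_fst hmu.2 ht₂,
    ← hnu.1.uniformEntropy_fst hnu.2 ht₃]
  exact uniformEntropy_row_le_of_sum_youngIdealChar_ne_zero (Set.injOn_univ.1 ht₁.injOn)
    (hlam.1.fst_lt_card_filter_snd ht₁)
    (hg.sum_youngIdealChar_ne_zero hchi hlam.1 hmu.1 hnu.1 ht₁ ht₂ ht₃ hg0)

end IsKroneckerFamily

lemma tendsto_sum_negMulLog {ι κ : Type*} [Fintype κ] {l : Filter ι} {u : ι → κ → ℝ} {x : κ → ℝ}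
    (hu : ∀ i, Tendsto (fun j ↦ u j i) l (nhds (x i))) :
    Tendsto (fun j ↦ ∑ i, Real.negMulLog (u j i)) l (nhds (∑ i, Real.negMulLog (x i))) :=
  tendsto_finsetSum _ fun i _ ↦ (Real.continuous_negMulLog.tendsto (x i)).comp (hu i)

theorem stmt_14_general {d : ℕ} {ι : Type*} {l : Filter ι} [l.NeBot]
    {chi : (k : ℕ) → (ℕ → ℕ) → Equiv.Perm (Fin k) → ℂ} (hchi : IsCharacterFamily chi)
    {g : (k : ℕ) → (ℕ → ℕ) → (ℕ → ℕ) → (ℕ → ℕ) → ℕ} (hg : IsKroneckerFamily chi g)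
    {kseq : ι → ℕ} (hkseq : ∀ᶠ j in l, kseq j ≠ 0) {lam mu nu : ι → ℕ → ℕ}
    (hlam : ∀ j, IsPartitionOf (kseq j) (lam j) ∧ ∀ i, d ≤ i → lam j i = 0)
    (hmu : ∀ j, IsPartitionOf (kseq j) (mu j) ∧ ∀ i, d ≤ i → mu j i = 0)
    (hnu : ∀ j, IsPartitionOf (kseq j) (nu j) ∧ ∀ i, d ≤ i → nu j i = 0)
    {p q s : Fin d → ℝ}
    (hpconv : ∀ i : Fin d, Tendsto (fun j ↦ (lam j i : ℝ) / kseq j) l (nhds (p i)))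
    (hqconv : ∀ i : Fin d, Tendsto (fun j ↦ (mu j i : ℝ) / kseq j) l (nhds (q i)))
    (hsconv : ∀ i : Fin d, Tendsto (fun j ↦ (nu j i : ℝ) / kseq j) l (nhds (s i)))
    (hg0 : ∀ j, g (kseq j) (lam j) (mu j) (nu j) ≠ 0) :
    ∑ i, Real.negMulLog (p i) ≤ ∑ i, Real.negMulLog (q i) + ∑ i, Real.negMulLog (s i) := by
  refine le_of_tendsto_of_tendsto (tendsto_sum_negMulLog hpconv)
    ((tendsto_sum_negMulLog hqconv).add (tendsto_sum_negMulLog hsconv)) ?_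
  filter_upwards [hkseq] with j hj
  have : NeZero (kseq j) := ⟨hj⟩
  exact hg.sum_negMulLog_le hchi (hlam j) (hmu j) (hnu j) (hg0 j)

/-- If `lam_j, mu_j, nu_j` are partitions of `k_j → ∞` with at most `d` parts whose
normalisations converge to probability vectors `p, q, s` and whose Kronecker coefficients
`g_{lam_j mu_j nu_j}` are all non-zero, then `H(p) ≤ H(q) + H(s)` for the Shannon entropy `H`. -/
theorem stmt_14 {d : ℕ}
    (chi : (k : ℕ) → (ℕ → ℕ) → Equiv.Perm (Fin k) → ℂ) (hchi : IsCharacterFamily chi)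
    (g : (k : ℕ) → (ℕ → ℕ) → (ℕ → ℕ) → (ℕ → ℕ) → ℕ) (hg : IsKroneckerFamily chi g)
    (kseq : ℕ → ℕ) (hkseq : Tendsto kseq atTop atTop)
    (lam mu nu : ℕ → ℕ → ℕ)
    (hlam : ∀ j, IsPartitionOf (kseq j) (lam j) ∧ ∀ i, d ≤ i → lam j i = 0)
    (hmu : ∀ j, IsPartitionOf (kseq j) (mu j) ∧ ∀ i, d ≤ i → mu j i = 0)
    (hnu : ∀ j, IsPartitionOf (kseq j) (nu j) ∧ ∀ i, d ≤ i → nu j i = 0)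
    (p q s : Fin d → ℝ)
    (hp : (∀ i, 0 ≤ p i) ∧ ∑ i, p i = 1) (hq : (∀ i, 0 ≤ q i) ∧ ∑ i, q i = 1)
    (hs : (∀ i, 0 ≤ s i) ∧ ∑ i, s i = 1)
    (hpconv : ∀ i : Fin d, Tendsto (fun j => (lam j i : ℝ) / (kseq j : ℝ)) atTop (nhds (p i)))
    (hqconv : ∀ i : Fin d, Tendsto (fun j => (mu j i : ℝ) / (kseq j : ℝ)) atTop (nhds (q i)))
    (hsconv : ∀ i : Fin d, Tendsto (fun j => (nu j i : ℝ) / (kseq j : ℝ)) atTop (nhds (s i)))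
    (hg0 : ∀ j, g (kseq j) (lam j) (mu j) (nu j) ≠ 0) :
    -(∑ i, p i * Real.log (p i)) ≤
      -(∑ i, q i * Real.log (q i)) + -(∑ i, s i * Real.log (s i)) := by
  simpa only [Real.negMulLog, neg_mul, sum_neg_distrib] using stmt_14_general hchi hg
    (hkseq.eventually_ne_atTop 0) hlam hmu hnu hpconv hqconv hsconv hg0

end
end
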